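/- arXiv:2007.07727 — 4 statements merged into one kernel-verified Lean document; each statement's English description precedes it below -/
import Mathlib

section
/- Let ψ : ℝ → ℂ be a 2π-periodic function satisfying the Lipschitz condition |ψ(u) − ψ(v)| ≤ C|u − v| for all u, v ∈ [−π, π] (for some absolute constant C > 0), let φ(u) = ψ(u) sinh(u), and let f(x) = (2x/π) ∫_{−π}^{π} K₀(x cosh u) φ(u) cosh(u) du for x > 0. For n ∈ ℕ define aₙ = ∫₀^∞ Lₙ(y) f(y) dy, where Lₙ(y) = ∫₀^y K_{in}(t)/(y² − t²)^{1/2} dt is the Lebedev kernel (π/(2 cosh(πn/2))) K_{in/2}(y)[I_{in/2}(y) + I_{−in/2}(y)]. Then for every x > 0 one has f(x) = (1/π³) Σ_{n=1}^∞ sinh(πn) Φₙ(x) aₙ, where Φₙ(x) = x ∫_{−π}^{π} K₀(x cosh u) sinh(2u) sin(nu) du. -/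
/-!
Write `K₀ = besselKi 0` and `Lₙ = lebedevL n`. The series is Parseval's identity in disguise: the
coefficients `aₙ` turn out to be, up to the factor `π / sinh (πn)`, the sine coefficients of `ψ`,
and `Φₙ(x)` is `x` times the sine coefficient of the odd function `u ↦ K₀(x cosh u) sinh 2u`.

The coefficients are computed from two integrals.

* For `c, t > 0`, `∫_{y > t} y K₀(cy) / √(y² - t²) dy = (π / 2c) e^{-ct}`
  (`integral_besselKi_zero_Ioi`). Substituting `sinh v = (√(y² - t²) / y) k` in
  `K₀(cy) = ∫ e^{-cy cosh v} dv` and exchanging the integrals, the `y`-integrand is an exact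
  derivative, and what is left is `∫₀^∞ dk / (1 + k²)`. With Fubini this gives
  `∫₀^∞ Lₙ(y) y K₀(cy) dy = (π / 2c) ∫₀^∞ K_{in}(t) e^{-ct} dt
  = (π / 2c) ∫₀^∞ cos (nw) / (c + cosh w) dw` (`integral_lebedevL_mul`).
* For `c = cosh u`, `sinh u ∫₀^∞ cos (τw) / (cosh u + cosh w) dw = π sin (τu) / sinh (πτ)`
  (`integral_cos_div_cosh_add_cosh`). With the logistic function `σ`,
  `sinh u / (cosh u + cosh w) = σ(w + u) - σ(w - u) = ∫_{-u}^{u} σ'(w + s) ds`, and the Fourier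
  transform of `σ' = σ (1 - σ)` is the Beta integral
  `B(1 + iτ, 1 - iτ) = Γ(1 + iτ) Γ(1 - iτ) = πτ / sinh (πτ)`.

Another application of Fubini yields `aₙ = (π / sinh (πn)) ∫_{-π}^{π} ψ(u) sin (nu) du`
(`lebedev_coefficient`), and Parseval's identity for an odd function (`hasSum_sine_parseval`)
sums the series to `π x · π ∫_{-π}^{π} K₀(x cosh u) sinh (2u) ψ(u) du = π³ f(x)`.
-/

open MeasureTheory Real

/-- The modified Bessel function of the second kind of purely imaginary order `iτ`,
`K_{iτ}(x) = ∫₀^∞ e^{−x cosh u} cos(τu) du` (real-valued). -/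
noncomputable def besselKi (τ x : ℝ) : ℝ :=
  ∫ u in Set.Ioi (0 : ℝ), Real.exp (-x * Real.cosh u) * Real.cos (τ * u)

/-- The Lebedev kernel `Lₙ(y) = ∫₀^y K_{in}(t)/(y² − t²)^{1/2} dt`, which equals
`(π/(2 cosh(πn/2))) K_{in/2}(y)[I_{in/2}(y) + I_{−in/2}(y)]`. -/
noncomputable def lebedevL (n : ℕ) (y : ℝ) : ℝ :=
  ∫ t in (0 : ℝ)..y, besselKi n t / Real.sqrt (y ^ 2 - t ^ 2)

/-- The kernel `Φₙ(x) = x ∫_{−π}^{π} K₀(x cosh u) sinh(2u) sin(nu) du`. -/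
noncomputable def PhiKer (n : ℕ) (x : ℝ) : ℝ :=
  x * ∫ u in (-π)..π, besselKi 0 (x * Real.cosh u) * Real.sinh (2 * u) * Real.sin (n * u)

/-! ### The Parseval identity for sine coefficients -/

/-- Polarised Parseval identity on an interval: the sesquilinear companion of
`hasSum_sq_fourierCoeffOn`. -/
theorem hasSum_conj_fourierCoeffOn_mul {a b : ℝ} (hab : a < b) {f g : ℝ → ℂ}
    (hf : MemLp f 2 (volume.restrict (Set.Ioc a b)))
    (hg : MemLp g 2 (volume.restrict (Set.Ioc a b))) :
    HasSum (fun i => (starRingEnd ℂ) (fourierCoeffOn hab f i) * fourierCoeffOn hab g i)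
      ((b - a)⁻¹ • ∫ x in a..b, (starRingEnd ℂ) (f x) * g x) := by
  have := Fact.mk (by linarith : 0 < b - a)
  rw [← add_sub_cancel a b] at hf hg
  have h1 := hf.memLp_liftIoc.haarAddCircle
  have h2 := hg.memLp_liftIoc.haarAddCircle
  have key := fourierBasis.hasSum_inner_mul_inner h1.toLp h2.toLp
  convert! key using 1
  · ext i
    rw [← inner_conj_symm, ← HilbertBasis.repr_apply_apply, ← HilbertBasis.repr_apply_apply,
      fourierBasis_repr, fourierBasis_repr]
    simp [fourierCoeff_congr_ae h1.coeFn_toLp, fourierCoeff_congr_ae h2.coeFn_toLp,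
      fourierCoeff_liftIoc_eq]
  · rw [MeasureTheory.L2.inner_def]
    nth_rw 2 [← add_sub_cancel a b]
    rw [← AddCircle.integral_liftIoc_eq_intervalIntegral, ← AddCircle.integral_haarAddCircle]
    apply integral_congr_ae
    filter_upwards [h1.coeFn_toLp, h2.coeFn_toLp] with x hx hy
    rw [hx, hy]
    simp [AddCircle.liftIoc, mul_comm]

theorem fourierCoeffOn_pi_eq {h : ℝ → ℂ} (hh : IntervalIntegrable h volume (-π) π) (n : ℤ) :
    fourierCoeffOn (neg_lt_self pi_pos) h n = (1 / (2 * π) : ℂ) *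
      ((∫ u in (-π)..π, h u * (Real.cos (n * u) : ℂ))
        - Complex.I * ∫ u in (-π)..π, h u * (Real.sin (n * u) : ℂ)) := by
  have hc : IntervalIntegrable (fun u => h u * (Real.cos (n * u) : ℂ)) volume (-π) π :=
    hh.mul_continuousOn (by fun_prop)
  have hs : IntervalIntegrable (fun u => h u * (Real.sin (n * u) : ℂ)) volume (-π) π :=
    hh.mul_continuousOn (by fun_prop)
  rw [fourierCoeffOn_eq_integral, ← intervalIntegral.integral_const_mul,
    ← intervalIntegral.integral_sub hc (hs.const_mul _)]
  have e : (1 / (π - -π)) = 1 / (2 * π) := by ring_nf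
  rw [e, Complex.real_smul]
  push_cast
  congr 1
  apply intervalIntegral.integral_congr
  intro u _
  simp only [fourier_coe_apply, smul_eq_mul]
  have : (2 * (π : ℂ) * Complex.I * ((-n : ℤ) : ℂ) * u / ((π - -π : ℝ) : ℂ))
      = ((-(n * u) : ℂ)) * Complex.I := by
    have : (π : ℂ) ≠ 0 := by exact_mod_cast pi_ne_zero
    push_cast
    field_simp
    ring
  rw [this, Complex.exp_mul_I, Complex.cos_neg, Complex.sin_neg]
  ring

/-- Parseval for a real odd function `g`: its cosine coefficients vanish, and the terms of index `n`
and `-n` combine, so only products of sine coefficients remain. -/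
theorem hasSum_sine_parseval {g : ℝ → ℝ} {h : ℝ → ℂ} (hodd : ∀ u, g (-u) = -g u)
    (hg : MemLp (fun u => (g u : ℂ)) 2 (volume.restrict (Set.Ioc (-π) π)))
    (hh : MemLp h 2 (volume.restrict (Set.Ioc (-π) π))) :
    HasSum (fun n : ℕ => ((∫ u in (-π)..π, g u * Real.sin (((n + 1 : ℕ) : ℝ) * u) : ℝ) : ℂ) *
        ∫ u in (-π)..π, h u * (Real.sin (((n + 1 : ℕ) : ℝ) * u) : ℂ))
      (π * ∫ u in (-π)..π, (g u : ℂ) * h u) := by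
  have hpi : -π < π := neg_lt_self pi_pos
  have hgi : IntervalIntegrable (fun u => (g u : ℂ)) volume (-π) π :=
    (intervalIntegrable_iff_integrableOn_Ioc_of_le hpi.le).2 (hg.integrable (by norm_num))
  have hhi : IntervalIntegrable h volume (-π) π :=
    (intervalIntegrable_iff_integrableOn_Ioc_of_le hpi.le).2 (hh.integrable (by norm_num))
  have P := (hasSum_conj_fourierCoeffOn_mul hpi hg hh)
  have gcos : ∀ n : ℤ, ∫ u in (-π)..π, (g u : ℂ) * (Real.cos (n * u) : ℂ) = 0 := by
    intro n
    have := intervalIntegral.integral_comp_neg (a := -π) (b := π)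
      (fun u => (g u : ℂ) * (Real.cos (n * u) : ℂ))
    simp only [hodd, neg_neg, mul_neg, Real.cos_neg, Complex.ofReal_neg, neg_mul,
      intervalIntegral.integral_neg] at this
    exact self_eq_neg.1 this.symm
  have gsin : ∀ n : ℤ, ∫ u in (-π)..π, (g u : ℂ) * (Real.sin (n * u) : ℂ)
      = ((∫ u in (-π)..π, g u * Real.sin (n * u) : ℝ) : ℂ) := by
    intro n
    rw [← intervalIntegral.integral_ofReal]
    simp
  have F : ∀ n : ℤ, (starRingEnd ℂ) (fourierCoeffOn hpi (fun u => (g u : ℂ)) n)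
      = (1 / (2 * π) : ℂ) * (Complex.I * ((∫ u in (-π)..π, g u * Real.sin (n * u) : ℝ) : ℂ)) := by
    intro n
    rw [fourierCoeffOn_pi_eq hgi, gcos, gsin]
    have h2 : (starRingEnd ℂ) 2 = 2 := Complex.conj_ofNat 2
    simp [h2]
  have Q := P.nat_add_neg
  rw [← hasSum_nat_add_iff' 1] at Q
  have R := Q.mul_left (2 * (π : ℂ) ^ 2)
  have hp : (π : ℂ) ≠ 0 := by exact_mod_cast pi_ne_zero
  convert! R using 1
  · ext n
    rw [F, F, fourierCoeffOn_pi_eq hhi, fourierCoeffOn_pi_eq hhi]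
    push_cast
    simp only [neg_mul, Complex.cos_neg, Complex.sin_neg, mul_neg, Real.sin_neg,
      intervalIntegral.integral_neg, Complex.ofReal_neg]
    field_simp
    ring_nf
    simp only [Complex.I_sq]
    ring
  · simp [F]
    field_simp
    ring

/-! ### The integral of `cos (τw) / (cosh u + cosh w)` -/

/-- The derivative `σ (1 - σ)` of the logistic function is integrable, being the pullback of the
constant `1` on `(0, 1)` along `σ`. -/
theorem integrable_sigmoid_deriv : Integrable (fun w : ℝ => sigmoid w * (1 - sigmoid w)) := by
  have h := (integrableOn_image_iff_integrableOn_abs_deriv_smul (s := Set.univ)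
    (f := sigmoid) (f' := fun w => sigmoid w * (1 - sigmoid w)) MeasurableSet.univ
    (fun x _ => (hasDerivAt_sigmoid x).hasDerivWithinAt) sigmoid_strictMono.injective.injOn
    (fun _ : ℝ => (1 : ℝ))).1 (by
      rw [Set.image_univ, range_sigmoid]
      exact integrableOn_const (by simp))
  rw [integrableOn_univ] at h
  refine h.congr (Filter.Eventually.of_forall fun w => ?_)
  have h1 := sigmoid_pos w
  have h2 := sigmoid_lt_one w
  simp only [smul_eq_mul, mul_one]
  exact abs_of_nonneg (mul_nonneg h1.le (by linarith))

/-- The Fourier transform of `σ' = σ (1 - σ)`. The substitution `s = σ(w)`, for which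
`e^w = s / (1 - s)`, turns it into the Beta integral `B(1 + iτ, 1 - iτ)`, evaluated by the reflection
formula. -/
theorem integral_exp_sigmoid_deriv {τ : ℝ} (hτ : τ ≠ 0) :
    ∫ w : ℝ, ((sigmoid w * (1 - sigmoid w) : ℝ) : ℂ) * Complex.exp ((τ * w : ℝ) * Complex.I)
      = ((π * τ / Real.sinh (π * τ) : ℝ) : ℂ) := by
  have h := (integral_image_eq_integral_abs_deriv_smul (s := Set.univ)
    (f := sigmoid) (f' := fun w => sigmoid w * (1 - sigmoid w)) MeasurableSet.univ
    (fun x _ => (hasDerivAt_sigmoid x).hasDerivWithinAt) sigmoid_strictMono.injective.injOn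
    (fun x : ℝ => (x : ℂ) ^ ((1 + τ * Complex.I) - 1) * (1 - x : ℂ) ^ ((1 - τ * Complex.I) - 1)))
  rw [Set.image_univ, range_sigmoid, Measure.restrict_univ, ← integral_Ioc_eq_integral_Ioo,
    ← intervalIntegral.integral_of_le zero_le_one] at h
  change Complex.betaIntegral _ _ = _ at h
  have hb := Complex.Gamma_mul_Gamma_eq_betaIntegral (s := 1 + τ * Complex.I)
    (t := 1 - τ * Complex.I) (by simp) (by simp)
  have hz : (τ * Complex.I : ℂ) ≠ 0 := by simp [hτ]
  have hg : Complex.Gamma (1 + τ * Complex.I) * Complex.Gamma (1 - τ * Complex.I)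
      = ((π * τ / Real.sinh (π * τ) : ℝ) : ℂ) := by
    rw [add_comm, Complex.Gamma_add_one _ hz, mul_assoc, Complex.Gamma_mul_Gamma_one_sub,
      ← mul_assoc, Complex.sin_mul_I]
    have : Complex.sinh (π * τ) ≠ 0 := by
      rw [← Complex.ofReal_mul, ← Complex.ofReal_sinh]
      exact_mod_cast (by simp [hτ, pi_ne_zero] : Real.sinh (π * τ) ≠ 0)
    push_cast
    have := Complex.I_ne_zero
    field_simp
  have h2 : (1 + τ * Complex.I) + (1 - τ * Complex.I) = ((1 : ℕ) : ℂ) + 1 := by push_cast; ring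
  rw [hg, h2, Complex.Gamma_nat_eq_factorial, Nat.factorial_one, Nat.cast_one, one_mul, h] at hb
  rw [hb]
  apply integral_congr_ae
  refine Filter.Eventually.of_forall fun w => ?_
  have h1 := sigmoid_pos w
  have h2 := sigmoid_lt_one w
  have h3 : (0 : ℝ) < 1 - sigmoid w := by linarith
  have h4 : Real.log (sigmoid w) - Real.log (1 - sigmoid w) = w := by
    rw [← Real.log_div h1.ne' h3.ne']
    have : sigmoid w / (1 - sigmoid w) = Real.exp w := by
      rw [← sigmoid_neg]
      simp only [sigmoid, neg_neg]
      rw [Real.exp_neg]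
      have := Real.exp_pos w
      field_simp
      ring
    rw [this, Real.log_exp]
  simp only
  rw [abs_of_nonneg (mul_nonneg h1.le h3.le), Complex.real_smul]
  congr 1
  have c1 : (sigmoid w : ℂ) ≠ 0 := by exact_mod_cast h1.ne'
  have c3 : (1 - sigmoid w : ℂ) ≠ 0 := by exact_mod_cast h3.ne'
  rw [Complex.cpow_def_of_ne_zero c1, Complex.cpow_def_of_ne_zero c3, ← Complex.exp_add]
  congr 1
  rw [show (1 - sigmoid w : ℂ) = ((1 - sigmoid w : ℝ) : ℂ) by push_cast; rfl,
    ← Complex.ofReal_log h1.le, ← Complex.ofReal_log h3.le]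
  have h5 : (w : ℂ) = (Real.log (sigmoid w) : ℂ) - (Real.log (1 - sigmoid w) : ℂ) := by
    exact_mod_cast h4.symm
  rw [Complex.ofReal_mul, h5]
  ring

theorem integral_cos_sub_sigmoid_deriv {τ : ℝ} (hτ : τ ≠ 0) (s : ℝ) :
    ∫ w : ℝ, (sigmoid w * (1 - sigmoid w)) * Real.cos (τ * (w - s))
      = Real.cos (τ * s) * (π * τ / Real.sinh (π * τ)) := by
  have h := congrArg (fun z => Complex.exp (-(τ * s : ℝ) * Complex.I) * z)
    (integral_exp_sigmoid_deriv hτ)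
  simp only [← integral_const_mul] at h
  have h' := congrArg Complex.re h
  have hi : Integrable (fun w : ℝ => Complex.exp (-(τ * s : ℝ) * Complex.I) *
      (((sigmoid w * (1 - sigmoid w) : ℝ) : ℂ) * Complex.exp ((τ * w : ℝ) * Complex.I))) := by
    apply Integrable.const_mul
    refine (integrable_sigmoid_deriv.ofReal (𝕜 := ℂ)).mul_bdd (c := 1)
      (by fun_prop) (Filter.Eventually.of_forall fun w => ?_)
    rw [Complex.norm_exp_ofReal_mul_I]
  have hre := integral_re hi
  simp only [RCLike.re_to_complex] at hre
  rw [← hre] at h'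
  convert h' using 1
  · apply integral_congr_ae
    refine Filter.Eventually.of_forall fun w => ?_
    simp only
    rw [mul_left_comm, ← Complex.exp_add, ← add_mul, ← Complex.ofReal_neg, ← Complex.ofReal_add,
      Complex.re_ofReal_mul, Complex.exp_ofReal_mul_I_re]
    ring_nf
  · rw [← Complex.ofReal_neg, Complex.re_mul_ofReal, Complex.exp_ofReal_mul_I_re, Real.cos_neg]

theorem sinh_div_cosh_add_cosh (u w : ℝ) :
    Real.sinh u / (Real.cosh u + Real.cosh w) = sigmoid (w + u) - sigmoid (w - u) := by
  simp only [sigmoid, Real.sinh_eq, Real.cosh_eq, neg_add, neg_sub, Real.exp_add, Real.exp_sub]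
  have h1 := Real.exp_pos w
  have h2 := Real.exp_pos u
  simp only [Real.exp_neg]
  field_simp
  ring

/-- Both sides are half the double integral of `σ'(w + s) cos (τw)` over `s` from `-u` to `u` and
`w ∈ ℝ`, integrated in the two orders. The factor `sinh u` is kept on the left so that `u = 0` needs
no separate treatment. -/
theorem integral_cos_div_cosh_add_cosh {τ : ℝ} (hτ : τ ≠ 0) (u : ℝ) :
    Real.sinh u * ∫ w in Set.Ioi (0 : ℝ), Real.cos (τ * w) / (Real.cosh u + Real.cosh w)
      = π * Real.sin (τ * u) / Real.sinh (π * τ) := by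
  have hsw : ∫ s in (-u)..u, ∫ w : ℝ,
        (sigmoid (w + s) * (1 - sigmoid (w + s))) * Real.cos (τ * w)
      = ∫ w : ℝ, ∫ s in (-u)..u,
        (sigmoid (w + s) * (1 - sigmoid (w + s))) * Real.cos (τ * w) := by
    apply intervalIntegral_integral_swap
    have hk : Integrable (Function.uncurry fun s w : ℝ =>
        sigmoid (w + s) * (1 - sigmoid (w + s))) ((volume.restrict (Set.uIoc (-u) u)).prod volume) := by
      rw [integrable_prod_iff (by
        apply Continuous.aestronglyMeasurable
        simp only [Function.uncurry_def]
        fun_prop)]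
      refine ⟨Filter.Eventually.of_forall fun s => integrable_sigmoid_deriv.comp_add_right s, ?_⟩
      have : ∀ s : ℝ, ∫ w : ℝ, ‖Function.uncurry (fun s w : ℝ =>
          sigmoid (w + s) * (1 - sigmoid (w + s))) (s, w)‖
          = ∫ w : ℝ, ‖sigmoid w * (1 - sigmoid w)‖ := fun s =>
        integral_add_right_eq_self (fun w => ‖sigmoid w * (1 - sigmoid w)‖) s
      simp only [this]
      rw [Set.uIoc]
      exact integrable_const _
    refine hk.mul_bdd (c := 1) (by fun_prop) (Filter.Eventually.of_forall fun p => ?_)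
      (g := fun p : ℝ × ℝ => Real.cos (τ * p.2))
    exact Real.abs_cos_le_one _
  have hL : ∀ s : ℝ, ∫ w : ℝ, (sigmoid (w + s) * (1 - sigmoid (w + s))) * Real.cos (τ * w)
      = Real.cos (τ * s) * (π * τ / Real.sinh (π * τ)) := by
    intro s
    rw [← integral_cos_sub_sigmoid_deriv hτ s]
    have := integral_add_right_eq_self (μ := volume)
      (fun w => (sigmoid w * (1 - sigmoid w)) * Real.cos (τ * (w - s))) s
    simpa using this
  have hR : ∀ w : ℝ, ∫ s in (-u)..u, (sigmoid (w + s) * (1 - sigmoid (w + s))) * Real.cos (τ * w)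
      = Real.sinh u * (Real.cos (τ * w) / (Real.cosh u + Real.cosh w)) := by
    intro w
    rw [intervalIntegral.integral_mul_const]
    have := intervalIntegral.integral_eq_sub_of_hasDerivAt (a := -u) (b := u)
      (f := fun s => sigmoid (w + s)) (f' := fun s => sigmoid (w + s) * (1 - sigmoid (w + s)))
      (fun s _ => (hasDerivAt_sigmoid (w + s)).comp_const_add w s)
      (Continuous.intervalIntegrable (by fun_prop) _ _)
    rw [this, ← sub_eq_add_neg, ← sinh_div_cosh_add_cosh]
    ring
  simp only [hL, hR] at hsw
  rw [integral_const_mul, intervalIntegral.integral_mul_const] at hsw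
  have hc : ∫ s in (-u)..u, Real.cos (τ * s) = 2 * Real.sin (τ * u) / τ := by
    rw [intervalIntegral.integral_comp_mul_left _ hτ, integral_cos]
    simp
    field_simp
    ring
  have habs := integral_comp_abs (f := fun w => Real.cos (τ * w) / (Real.cosh u + Real.cosh w))
  have heq : ∀ w : ℝ, Real.cos (τ * |w|) / (Real.cosh u + Real.cosh |w|)
      = Real.cos (τ * w) / (Real.cosh u + Real.cosh w) := by
    intro w
    rw [Real.cosh_abs]
    congr 1
    rcases abs_choice w with h | h <;> rw [h]
    rw [mul_neg, Real.cos_neg]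
  simp only [heq] at habs
  rw [hc, habs] at hsw
  have : Real.sinh (π * τ) ≠ 0 := by simp [hτ, pi_ne_zero]
  field_simp at hsw ⊢
  linarith

/-! ### Bessel functions of imaginary order -/

theorem integrableOn_exp_neg_mul_cosh {x : ℝ} (hx : 0 < x) :
    IntegrableOn (fun u => Real.exp (-x * Real.cosh u)) (Set.Ioi 0) := by
  refine Integrable.mono' (integrableOn_exp_mul_Ioi (neg_neg_of_pos hx) 0)
    (by fun_prop) ?_
  refine (ae_restrict_mem measurableSet_Ioi).mono fun u hu => ?_
  rw [Real.norm_eq_abs, Real.abs_exp, Real.exp_le_exp]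
  have h1 : u ≤ Real.cosh u := (Real.self_le_sinh_iff.2 (le_of_lt hu)).trans (Real.sinh_lt_cosh u).le
  nlinarith

theorem besselKi_zero_eq (x : ℝ) :
    besselKi 0 x = ∫ u in Set.Ioi (0 : ℝ), Real.exp (-x * Real.cosh u) := by
  simp [besselKi]

theorem besselKi_zero_nonneg (x : ℝ) : 0 ≤ besselKi 0 x := by
  rw [besselKi_zero_eq]
  exact integral_nonneg fun u => (Real.exp_pos _).le

theorem abs_besselKi_le (τ : ℝ) {x : ℝ} (hx : 0 < x) : |besselKi τ x| ≤ besselKi 0 x := by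
  rw [besselKi_zero_eq]
  rw [besselKi, ← Real.norm_eq_abs]
  refine norm_integral_le_of_norm_le (integrableOn_exp_neg_mul_cosh hx)
    (Filter.Eventually.of_forall fun u => ?_)
  rw [norm_mul, Real.norm_eq_abs, Real.norm_eq_abs, Real.abs_exp]
  exact mul_le_of_le_one_right (Real.exp_pos _).le (Real.abs_cos_le_one _)

theorem besselKi_zero_le {x y : ℝ} (hx : 0 < x) (hxy : x ≤ y) :
    besselKi 0 y ≤ besselKi 0 x := by
  rw [besselKi_zero_eq, besselKi_zero_eq]
  refine integral_mono (integrableOn_exp_neg_mul_cosh (hx.trans_le hxy))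
    (integrableOn_exp_neg_mul_cosh hx) fun u => ?_
  have := Real.cosh_pos u
  simp only [Real.exp_le_exp]
  nlinarith

theorem measurable_besselKi (τ : ℝ) : Measurable (besselKi τ) := by
  have h : StronglyMeasurable (Function.uncurry fun x u : ℝ =>
      Real.exp (-x * Real.cosh u) * Real.cos (τ * u)) := by
    apply Continuous.stronglyMeasurable
    simp only [Function.uncurry_def]
    fun_prop
  exact (h.integral_prod_right (ν := volume.restrict (Set.Ioi (0 : ℝ)))).measurable

theorem integrableOn_inv_add_cosh {c : ℝ} (hc : 0 < c) :
    IntegrableOn (fun w => 1 / (c + Real.cosh w)) (Set.Ioi 0) := by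
  refine Integrable.mono' ((integrableOn_exp_mul_Ioi (neg_neg_of_pos one_pos) 0).const_mul 2)
    ?_ ?_
  · apply Continuous.aestronglyMeasurable
    refine continuous_const.div (by fun_prop) fun w => ?_
    have := Real.cosh_pos w
    positivity
  · refine Filter.Eventually.of_forall fun w => ?_
    have := Real.cosh_pos w
    rw [Real.norm_eq_abs, abs_of_nonneg (by positivity), div_le_iff₀ (by positivity),
      Real.cosh_eq, neg_mul, one_mul]
    have h1 : Real.exp (-w) * Real.exp w = 1 := by rw [← Real.exp_add]; simp
    have := Real.exp_pos (-w)
    nlinarith [mul_pos this this, mul_pos this hc]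

theorem integrable_exp_mul_cos_prod (τ : ℝ) {c : ℝ} (hc : 0 < c) :
    Integrable (Function.uncurry fun t w : ℝ =>
        Real.exp (-t * Real.cosh w) * Real.cos (τ * w) * Real.exp (-c * t))
      ((volume.restrict (Set.Ioi 0)).prod (volume.restrict (Set.Ioi 0))) := by
  have key : Integrable (Function.uncurry fun t w : ℝ => Real.exp (-(c + Real.cosh w) * t))
      ((volume.restrict (Set.Ioi 0)).prod (volume.restrict (Set.Ioi 0))) := by
    rw [integrable_prod_iff' (by
        apply Continuous.aestronglyMeasurable
        simp only [Function.uncurry_def]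
        fun_prop)]
    refine ⟨Filter.Eventually.of_forall fun w => ?_, ?_⟩
    · have := Real.cosh_pos w
      have h : -(c + Real.cosh w) < 0 := by linarith
      exact integrableOn_exp_mul_Ioi h 0
    · refine (integrableOn_inv_add_cosh hc).congr (Filter.Eventually.of_forall fun w => ?_)
      have := Real.cosh_pos w
      simp only [Function.uncurry_apply_pair, Real.norm_eq_abs, Real.abs_exp]
      rw [integral_exp_mul_Ioi (by linarith)]
      rw [mul_zero, Real.exp_zero, neg_div_neg_eq]
  have := key.mul_bdd (c := 1) (g := fun p : ℝ × ℝ => Real.cos (τ * p.2)) (by fun_prop)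
    (Filter.Eventually.of_forall fun p => Real.abs_cos_le_one _)
  refine this.congr (Filter.Eventually.of_forall fun p => ?_)
  simp only [Function.uncurry_def]
  rw [mul_right_comm, ← Real.exp_add]
  ring_nf

theorem integrableOn_besselKi_mul_exp (τ : ℝ) {c : ℝ} (hc : 0 < c) :
    IntegrableOn (fun t => besselKi τ t * Real.exp (-c * t)) (Set.Ioi 0) := by
  refine (integrable_exp_mul_cos_prod τ hc).integral_prod_left.congr
    (Filter.Eventually.of_forall fun t => ?_)
  simp only [Function.uncurry_apply_pair, integral_mul_const, besselKi]

/-- The Laplace transform of `K_{iτ}`. -/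
theorem integral_besselKi_mul_exp (τ : ℝ) {c : ℝ} (hc : 0 < c) :
    ∫ t in Set.Ioi (0 : ℝ), besselKi τ t * Real.exp (-c * t)
      = ∫ w in Set.Ioi (0 : ℝ), Real.cos (τ * w) / (c + Real.cosh w) := by
  have h := integral_integral_swap (integrable_exp_mul_cos_prod τ hc)
  simp only [integral_mul_const] at h
  rw [show (∫ t in Set.Ioi (0 : ℝ), besselKi τ t * Real.exp (-c * t)) = _ from h]
  refine integral_congr_ae (Filter.Eventually.of_forall fun w => ?_)
  have := Real.cosh_pos w
  have e : ∀ t : ℝ, Real.exp (-t * Real.cosh w) * Real.cos (τ * w) * Real.exp (-c * t)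
      = Real.cos (τ * w) * Real.exp (-(c + Real.cosh w) * t) := by
    intro t
    rw [mul_right_comm, ← Real.exp_add, mul_comm]
    ring_nf
  simp only [e]
  rw [integral_const_mul, integral_exp_mul_Ioi (by linarith), mul_zero, Real.exp_zero,
    neg_div_neg_eq, mul_one_div]

/-- `K₀` after the substitution `sinh v = α k`. -/
theorem besselKi_zero_eq_integral_arsinh {α : ℝ} (hα : 0 < α) (x : ℝ) :
    besselKi 0 x = ∫ k in Set.Ioi (0 : ℝ),
      α / √(1 + (α * k) ^ 2) * Real.exp (-x * √(1 + (α * k) ^ 2)) := by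
  have himg : (fun k => Real.arsinh (α * k)) '' Set.Ioi 0 = Set.Ioi 0 := by
    ext v
    constructor
    · rintro ⟨k, hk, rfl⟩
      exact Real.arsinh_pos_iff.2 (mul_pos hα hk)
    · intro hv
      refine ⟨Real.sinh v / α, div_pos (Real.sinh_pos_iff.2 hv) hα, ?_⟩
      simp only [mul_div_cancel₀ _ hα.ne', Real.arsinh_sinh]
  have h := integral_image_eq_integral_abs_deriv_smul (s := Set.Ioi (0 : ℝ))
    (f := fun k => Real.arsinh (α * k)) (f' := fun k => α / √(1 + (α * k) ^ 2))
    measurableSet_Ioi (fun k _ => by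
      have h1 : HasDerivAt (fun k => α * k) α k := by
        simpa using (hasDerivAt_id k).const_mul α
      have := h1.arsinh
      refine (this.congr_deriv ?_).hasDerivWithinAt
      rw [smul_eq_mul, div_eq_inv_mul])
    (fun a _ b _ hab => by
      have := Real.arsinh_injective hab
      exact mul_left_cancel₀ hα.ne' this)
    (fun v => Real.exp (-x * Real.cosh v))
  rw [himg] at h
  rw [besselKi_zero_eq, h]
  refine integral_congr_ae (Filter.Eventually.of_forall fun k => ?_)
  simp only [Real.cosh_arsinh, smul_eq_mul]
  rw [abs_of_nonneg (by positivity)]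

/-! ### Integrals against the Lebedev kernel -/

/-- The inner integral in `y`: since `y² + (y² - t²) k²` has derivative `2y (1 + k²)`, the integrand
is an exact derivative. -/
theorem integral_exp_neg_sqrt_Ioi {c t : ℝ} (hc : 0 < c) (ht : 0 < t) (k : ℝ) :
    IntegrableOn (fun y => y * Real.exp (-c * √(y ^ 2 + (y ^ 2 - t ^ 2) * k ^ 2))
        / √(y ^ 2 + (y ^ 2 - t ^ 2) * k ^ 2)) (Set.Ioi t) ∧
      ∫ y in Set.Ioi t, y * Real.exp (-c * √(y ^ 2 + (y ^ 2 - t ^ 2) * k ^ 2))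
        / √(y ^ 2 + (y ^ 2 - t ^ 2) * k ^ 2) = Real.exp (-c * t) / c * (1 + k ^ 2)⁻¹ := by
  have hle : ∀ y ∈ Set.Ici t, y ^ 2 ≤ y ^ 2 + (y ^ 2 - t ^ 2) * k ^ 2 := by
    intro y hy
    have : 0 ≤ y ^ 2 - t ^ 2 := by nlinarith [Set.mem_Ici.1 hy]
    nlinarith [mul_nonneg this (sq_nonneg k)]
  have hderiv : ∀ y ∈ Set.Ici t, HasDerivAt
      (fun y => -(Real.exp (-c * √(y ^ 2 + (y ^ 2 - t ^ 2) * k ^ 2)) / (c * (1 + k ^ 2))))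
      (y * Real.exp (-c * √(y ^ 2 + (y ^ 2 - t ^ 2) * k ^ 2))
        / √(y ^ 2 + (y ^ 2 - t ^ 2) * k ^ 2)) y := by
    intro y hy
    have hy0 : 0 < y := ht.trans_le hy
    have hpos : 0 < y ^ 2 + (y ^ 2 - t ^ 2) * k ^ 2 := lt_of_lt_of_le (by positivity) (hle y hy)
    have h1 : HasDerivAt (fun y : ℝ => y ^ 2 + (y ^ 2 - t ^ 2) * k ^ 2)
        (2 * y + (2 * y) * k ^ 2) y := by
      have h0 : HasDerivAt (fun y : ℝ => y ^ 2) (2 * y) y := by simpa using hasDerivAt_pow 2 y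
      exact h0.add ((h0.sub_const _).mul_const _)
    have h2 := (((h1.sqrt hpos.ne').const_mul (-c)).exp.div_const (c * (1 + k ^ 2))).neg
    refine h2.congr_deriv ?_
    have : 0 < √(y ^ 2 + (y ^ 2 - t ^ 2) * k ^ 2) := Real.sqrt_pos.2 hpos
    field_simp
  have hnn : ∀ y ∈ Set.Ioi t, 0 ≤ y * Real.exp (-c * √(y ^ 2 + (y ^ 2 - t ^ 2) * k ^ 2))
        / √(y ^ 2 + (y ^ 2 - t ^ 2) * k ^ 2) := by
    intro y hy
    have hy0 : 0 < y := ht.trans hy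
    positivity
  have htend : Filter.Tendsto
      (fun y => -(Real.exp (-c * √(y ^ 2 + (y ^ 2 - t ^ 2) * k ^ 2)) / (c * (1 + k ^ 2))))
      Filter.atTop (nhds 0) := by
    have h1 : Filter.Tendsto (fun y => √(y ^ 2 + (y ^ 2 - t ^ 2) * k ^ 2))
        Filter.atTop Filter.atTop := by
      refine Filter.tendsto_atTop_mono' _ ?_ Filter.tendsto_id
      filter_upwards [Filter.eventually_ge_atTop t] with y hy
      exact Real.le_sqrt_of_sq_le (hle y hy)
    have h2 := Real.tendsto_exp_atBot.comp (h1.const_mul_atTop_of_neg (neg_neg_of_pos hc))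
    simpa using (h2.div_const (c * (1 + k ^ 2))).neg
  refine ⟨integrableOn_Ioi_deriv_of_nonneg' hderiv hnn htend, ?_⟩
  rw [integral_Ioi_of_hasDerivAt_of_nonneg' hderiv hnn htend]
  rw [sub_self, zero_mul, add_zero, Real.sqrt_sq ht.le]
  field_simp
  ring

/-- The inner integral in `k`: the substitution `sinh v = (√(y² - t²) / y) k` in `K₀(cy)`. -/
theorem integral_arsinh_kernel {c t y : ℝ} (ht : 0 < t) (hy : t < y) :
    ∫ k in Set.Ioi (0 : ℝ), y * Real.exp (-c * √(y ^ 2 + (y ^ 2 - t ^ 2) * k ^ 2))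
        / √(y ^ 2 + (y ^ 2 - t ^ 2) * k ^ 2)
      = y * besselKi 0 (y * c) / √(y ^ 2 - t ^ 2) := by
  have hy0 : 0 < y := ht.trans hy
  have hd : 0 < y ^ 2 - t ^ 2 := by nlinarith
  have hs : 0 < √(y ^ 2 - t ^ 2) := Real.sqrt_pos.2 hd
  rw [besselKi_zero_eq_integral_arsinh (div_pos hs hy0), mul_div_right_comm, ← integral_const_mul]
  refine integral_congr_ae (Filter.Eventually.of_forall fun k => ?_)
  have e : √(y ^ 2 + (y ^ 2 - t ^ 2) * k ^ 2)
      = y * √(1 + (√(y ^ 2 - t ^ 2) / y * k) ^ 2) := by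
    have : y ^ 2 + (y ^ 2 - t ^ 2) * k ^ 2
        = y ^ 2 * (1 + (√(y ^ 2 - t ^ 2) / y * k) ^ 2) := by
      rw [mul_pow, div_pow, Real.sq_sqrt hd.le]
      field_simp
    rw [this, Real.sqrt_mul (sq_nonneg y), Real.sqrt_sq hy0.le]
  simp only [e]
  have : 0 < √(1 + (√(y ^ 2 - t ^ 2) / y * k) ^ 2) := by positivity
  field_simp

/-- The Abel-type integral `∫_{y > t} y K₀(cy) / √(y² - t²) dy = (π / 2c) e^{-ct}`, obtained by
integrating the same kernel in `(k, y)` in the two orders. -/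
theorem integral_besselKi_zero_Ioi {c t : ℝ} (hc : 0 < c) (ht : 0 < t) :
    IntegrableOn (fun y => y * besselKi 0 (y * c) / √(y ^ 2 - t ^ 2)) (Set.Ioi t) ∧
      ∫ y in Set.Ioi t, y * besselKi 0 (y * c) / √(y ^ 2 - t ^ 2)
        = π / (2 * c) * Real.exp (-c * t) := by
  have hint : Integrable (Function.uncurry fun k y : ℝ =>
      y * Real.exp (-c * √(y ^ 2 + (y ^ 2 - t ^ 2) * k ^ 2))
        / √(y ^ 2 + (y ^ 2 - t ^ 2) * k ^ 2))
      ((volume.restrict (Set.Ioi 0)).prod (volume.restrict (Set.Ioi t))) := by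
    rw [integrable_prod_iff (by
        apply Measurable.aestronglyMeasurable
        simp only [Function.uncurry_def]
        fun_prop)]
    refine ⟨Filter.Eventually.of_forall fun k => (integral_exp_neg_sqrt_Ioi hc ht k).1, ?_⟩
    refine ((integrable_inv_one_add_sq.const_mul (Real.exp (-c * t) / c)).integrableOn).congr
      (Filter.Eventually.of_forall fun k => ?_)
    simp only
    rw [← (integral_exp_neg_sqrt_Ioi hc ht k).2]
    refine setIntegral_congr_fun measurableSet_Ioi fun y hy => ?_
    have hy0 : 0 < y := ht.trans hy
    simp only [Function.uncurry_apply_pair]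
    rw [Real.norm_of_nonneg (by positivity)]
  constructor
  · refine hint.integral_prod_right.congr ?_
    refine (ae_restrict_mem measurableSet_Ioi).mono fun y hy => ?_
    exact integral_arsinh_kernel ht hy
  · have h := integral_integral_swap hint
    rw [setIntegral_congr_fun measurableSet_Ioi fun y hy => (integral_arsinh_kernel ht hy).symm]
    rw [← h]
    simp only [(integral_exp_neg_sqrt_Ioi hc ht _).2]
    rw [integral_const_mul, integral_Ioi_inv_one_add_sq, Real.arctan_zero]
    field_simp
    ring

/-- The Fubini statement behind the transform of the Lebedev kernel. For `t ≥ y > 0` the integrand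
vanishes, because `√(y² - t²) = 0` and division by zero gives zero. -/
theorem integrable_lebedev_prod (n : ℕ) {c : ℝ} (hc : 0 < c) :
    Integrable (Function.uncurry fun t y : ℝ =>
        besselKi n t / √(y ^ 2 - t ^ 2) * (y * besselKi 0 (y * c)))
      ((volume.restrict (Set.Ioi 0)).prod (volume.restrict (Set.Ioi 0))) := by
  have hz : ∀ t : ℝ, 0 < t → ∀ y ∈ Set.Ioi (0 : ℝ) \ Set.Ioi t,
      y * besselKi 0 (y * c) / √(y ^ 2 - t ^ 2) = 0 := by
    intro t ht y hy
    have h1 : 0 < y := hy.1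
    have h2 : y ≤ t := not_lt.1 hy.2
    rw [Real.sqrt_eq_zero_of_nonpos (by nlinarith), div_zero]
  have m1 := measurable_besselKi (n : ℝ)
  have m0 := measurable_besselKi 0
  rw [integrable_prod_iff (by
        apply Measurable.aestronglyMeasurable
        simp only [Function.uncurry_def]
        fun_prop)]
  constructor
  · refine (ae_restrict_mem measurableSet_Ioi).mono fun t ht => ?_
    have h := (integral_besselKi_zero_Ioi hc ht).1.of_forall_sdiff_eq_zero measurableSet_Ioi
      (hz t ht)
    refine (h.const_mul (besselKi n t)).congr (Filter.Eventually.of_forall fun y => ?_)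
    simp only [Function.uncurry_apply_pair]
    ring
  · refine ((integrableOn_besselKi_mul_exp n hc).norm.const_mul (π / (2 * c))).congr ?_
    refine (ae_restrict_mem measurableSet_Ioi).mono fun t ht => ?_
    have h := (integral_besselKi_zero_Ioi hc ht).2
    rw [← setIntegral_eq_of_subset_of_forall_sdiff_eq_zero measurableSet_Ioi
      (Set.Ioi_subset_Ioi (le_of_lt ht)) (hz t ht)] at h
    simp only [norm_mul, Real.norm_eq_abs, Real.abs_exp]
    rw [mul_left_comm, ← h, ← integral_const_mul]
    refine setIntegral_congr_fun measurableSet_Ioi fun y hy => ?_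
    have hy0 : 0 < y := hy
    have := besselKi_zero_nonneg (y * c)
    simp only [Function.uncurry_apply_pair]
    rw [abs_mul, abs_div, abs_of_nonneg (Real.sqrt_nonneg _), abs_of_nonneg (mul_nonneg hy0.le this)]
    ring

/-- The integral defining `Lₙ(y)` may be extended to `(0, ∞)`: beyond `y` the integrand is a division
by `√(y² - t²) = 0`, hence zero. -/
theorem lebedevL_eq_integral_Ioi (n : ℕ) {y : ℝ} (hy : 0 < y) :
    ∫ t in Set.Ioi (0 : ℝ), besselKi n t / √(y ^ 2 - t ^ 2) = lebedevL n y := by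
  rw [lebedevL, intervalIntegral.integral_of_le hy.le]
  refine setIntegral_eq_of_subset_of_forall_sdiff_eq_zero measurableSet_Ioi
    Set.Ioc_subset_Ioi_self fun t ht => ?_
  have h1 : 0 < t := ht.1
  have h2 : y < t := by
    by_contra h
    exact ht.2 ⟨h1, not_lt.1 h⟩
  rw [Real.sqrt_eq_zero_of_nonpos (by nlinarith), div_zero]

theorem aestronglyMeasurable_lebedevL (n : ℕ) :
    AEStronglyMeasurable (lebedevL n) (volume.restrict (Set.Ioi 0)) := by
  have m1 := measurable_besselKi (n : ℝ)
  have h : StronglyMeasurable (Function.uncurry fun y t : ℝ =>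
      besselKi n t / √(y ^ 2 - t ^ 2)) := by
    apply Measurable.stronglyMeasurable
    simp only [Function.uncurry_def]
    fun_prop
  refine (h.integral_prod_right (ν := volume.restrict (Set.Ioi (0 : ℝ)))).aestronglyMeasurable.congr
    ((ae_restrict_mem measurableSet_Ioi).mono fun y hy => ?_)
  exact lebedevL_eq_integral_Ioi n hy

theorem integrableOn_lebedevL_mul (n : ℕ) {c : ℝ} (hc : 0 < c) :
    IntegrableOn (fun y => lebedevL n y * (y * besselKi 0 (y * c))) (Set.Ioi 0) := by
  refine (integrable_lebedev_prod n hc).integral_prod_right.congr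
    ((ae_restrict_mem measurableSet_Ioi).mono fun y hy => ?_)
  simp only [Function.uncurry_apply_pair, integral_mul_const]
  rw [lebedevL_eq_integral_Ioi n hy]

theorem integral_lebedevL_mul (n : ℕ) {c : ℝ} (hc : 0 < c) :
    ∫ y in Set.Ioi (0 : ℝ), lebedevL n y * (y * besselKi 0 (y * c))
      = π / (2 * c) * ∫ w in Set.Ioi (0 : ℝ), Real.cos (n * w) / (c + Real.cosh w) := by
  have h := integral_integral_swap (integrable_lebedev_prod n hc)
  have e : ∀ y ∈ Set.Ioi (0 : ℝ), lebedevL n y * (y * besselKi 0 (y * c))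
      = ∫ t in Set.Ioi (0 : ℝ), besselKi n t / √(y ^ 2 - t ^ 2) * (y * besselKi 0 (y * c)) := by
    intro y hy
    rw [integral_mul_const, lebedevL_eq_integral_Ioi n hy]
  rw [setIntegral_congr_fun measurableSet_Ioi e, ← h, ← integral_besselKi_mul_exp n hc,
    ← integral_const_mul]
  refine setIntegral_congr_fun measurableSet_Ioi fun t ht => ?_
  have ht0 : 0 < t := ht
  rw [mul_left_comm, ← (integral_besselKi_zero_Ioi hc ht).2, ← integral_const_mul,
    ← setIntegral_eq_of_subset_of_forall_sdiff_eq_zero measurableSet_Ioi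
      (Set.Ioi_subset_Ioi ht0.le)]
  · refine setIntegral_congr_fun measurableSet_Ioi fun y hy => ?_
    ring
  · intro y hy
    have h1 : 0 < y := hy.1
    have h2 : y ≤ t := not_lt.1 hy.2
    rw [Real.sqrt_eq_zero_of_nonpos (by nlinarith), div_zero, mul_zero]

/-! ### The coefficients and the inversion formula -/

/-- The transform coefficients `aₙ` are multiples of the sine coefficients of `ψ`. -/
theorem lebedev_coefficient {ψ : ℝ → ℂ} (hψ : ContinuousOn ψ (Set.Icc (-π) π)) {f : ℝ → ℂ}
    (hf : ∀ x : ℝ, 0 < x → f x = ((2 * x / π : ℝ) : ℂ) *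
      ∫ u in (-π)..π, ((besselKi 0 (x * Real.cosh u) : ℝ) : ℂ) * (ψ u * Real.sinh u)
        * (Real.cosh u : ℂ))
    {n : ℕ} (hn : n ≠ 0) :
    ∫ y in Set.Ioi (0 : ℝ), ((lebedevL n y : ℝ) : ℂ) * f y
      = ((π / Real.sinh (π * n) : ℝ) : ℂ) * ∫ u in (-π)..π, ψ u * (Real.sin (n * u) : ℂ) := by
  have hpi : -π ≤ π := (neg_lt_self pi_pos).le
  have hpc : (π : ℂ) ≠ 0 := by exact_mod_cast pi_ne_zero
  have hn' : (n : ℝ) ≠ 0 := by exact_mod_cast hn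
  -- the integrand as a function of `(u, y)`
  have hG : Integrable (Function.uncurry fun u y : ℝ =>
      (ψ u * Real.sinh u * Real.cosh u) *
        ((lebedevL n y * (y * besselKi 0 (y * Real.cosh u)) : ℝ) : ℂ))
      ((volume.restrict (Set.Ioc (-π) π)).prod (volume.restrict (Set.Ioi 0))) := by
    have h1 : Integrable (fun u => ψ u * Real.sinh u * Real.cosh u)
        (volume.restrict (Set.Ioc (-π) π)) := by
      have : ContinuousOn (fun u => ψ u * Real.sinh u * Real.cosh u) (Set.Icc (-π) π) := by
        fun_prop
      exact this.integrableOn_Icc.mono_set Set.Ioc_subset_Icc_self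
    -- `K₀` is decreasing and `cosh u ≥ 1`, so `c = 1` gives a dominating function for all `u`
    have h2 := integrableOn_lebedevL_mul n one_pos
    have hb := h1.norm.mul_prod h2.norm
    have mL := aestronglyMeasurable_lebedevL n
    have m0 := measurable_besselKi 0
    refine hb.mono' ?_ ?_
    · refine (h1.aestronglyMeasurable.comp_fst).mul ?_
      refine Complex.continuous_ofReal.comp_aestronglyMeasurable ?_
      refine (mL.comp_snd).mul (Measurable.aestronglyMeasurable ?_)
      fun_prop
    · rw [Measure.prod_restrict]
      refine (ae_restrict_mem (measurableSet_Ioc.prod measurableSet_Ioi)).mono fun p hp => ?_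
      have hy : 0 < p.2 := hp.2
      simp only [Function.uncurry_def]
      rw [norm_mul, Complex.norm_real]
      refine mul_le_mul_of_nonneg_left ?_ (norm_nonneg _)
      rw [norm_mul, norm_mul (lebedevL n p.2)]
      refine mul_le_mul_of_nonneg_left ?_ (norm_nonneg _)
      rw [Real.norm_of_nonneg (mul_nonneg hy.le (besselKi_zero_nonneg _)),
        Real.norm_of_nonneg (mul_nonneg hy.le (besselKi_zero_nonneg _))]
      refine mul_le_mul_of_nonneg_left (besselKi_zero_le (by simpa using hy) ?_) hy.le
      exact mul_le_mul_of_nonneg_left (Real.one_le_cosh _) hy.le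
  have hL : ∀ y ∈ Set.Ioi (0 : ℝ), ((lebedevL n y : ℝ) : ℂ) * f y
      = (2 / π : ℂ) * ∫ u in Set.Ioc (-π) π, (ψ u * Real.sinh u * Real.cosh u) *
        ((lebedevL n y * (y * besselKi 0 (y * Real.cosh u)) : ℝ) : ℂ) := by
    intro y hy
    rw [hf y hy, intervalIntegral.integral_of_le hpi, ← integral_const_mul, ← integral_const_mul,
      ← integral_const_mul]
    refine integral_congr_ae (Filter.Eventually.of_forall fun u => ?_)
    push_cast
    ring
  rw [setIntegral_congr_fun measurableSet_Ioi hL, integral_const_mul,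
    ← integral_integral_swap hG, intervalIntegral.integral_of_le hpi, ← integral_const_mul,
    ← integral_const_mul]
  refine integral_congr_ae (Filter.Eventually.of_forall fun u => ?_)
  have hcosh := Real.cosh_pos u
  have hcc : (Real.cosh u : ℂ) ≠ 0 := by exact_mod_cast hcosh.ne'
  simp only
  rw [integral_const_mul, integral_complex_ofReal, integral_lebedevL_mul n hcosh]
  have key := integral_cos_div_cosh_add_cosh hn' u
  have key' : (Real.sinh u : ℂ) *
      ((∫ w in Set.Ioi (0 : ℝ), Real.cos (n * w) / (Real.cosh u + Real.cosh w) : ℝ) : ℂ)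
      = ((π / Real.sinh (π * n) : ℝ) : ℂ) * (Real.sin (n * u) : ℂ) := by
    rw [← Complex.ofReal_mul, key, ← Complex.ofReal_mul]
    congr 1
    ring
  calc _ = ψ u * ((Real.sinh u : ℂ) *
      ((∫ w in Set.Ioi (0 : ℝ), Real.cos (n * w) / (Real.cosh u + Real.cosh w) : ℝ) : ℂ)) := by
        rw [Complex.ofReal_mul, Complex.ofReal_div, Complex.ofReal_mul, Complex.ofReal_ofNat]
        field_simp
    _ = _ := by rw [key']; ring

/-- Theorem 1: inversion of the discrete Lebedev transform (1.4). -/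
theorem lebedev_discrete_inversion_first
    (C : ℝ) (hC : 0 < C) (ψ : ℝ → ℂ)
    (hper : ∀ u : ℝ, ψ (u + 2 * π) = ψ u)
    (hlip : ∀ u ∈ Set.Icc (-π) π, ∀ v ∈ Set.Icc (-π) π, ‖ψ u - ψ v‖ ≤ C * |u - v|)
    (φ : ℝ → ℂ) (hφ : ∀ u : ℝ, φ u = ψ u * Real.sinh u)
    (f : ℝ → ℂ)
    (hf : ∀ x : ℝ, 0 < x → f x = ((2 * x / π : ℝ) : ℂ) *
      ∫ u in (-π)..π, ((besselKi 0 (x * Real.cosh u) : ℝ) : ℂ) * φ u * (Real.cosh u : ℂ))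
    (a : ℕ → ℂ)
    (ha : ∀ n : ℕ, a n = ∫ y in Set.Ioi (0 : ℝ), ((lebedevL n y : ℝ) : ℂ) * f y) :
    ∀ x : ℝ, 0 < x →
      HasSum (fun n : ℕ =>
          ((Real.sinh (π * ((n : ℝ) + 1)) * PhiKer (n + 1) x : ℝ) : ℂ) * a (n + 1))
        (((π ^ 3 : ℝ) : ℂ) * f x) := by
  intro x hx
  have hψ : ContinuousOn ψ (Set.Icc (-π) π) := by
    refine LipschitzOnWith.continuousOn (K := ⟨C, hC.le⟩)
      (LipschitzOnWith.of_dist_le_mul fun u hu v hv => ?_)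
    rw [dist_eq_norm, Real.dist_eq]
    exact hlip u hu v hv
  have hpi : -π ≤ π := (neg_lt_self pi_pos).le
  have hpc : (π : ℂ) ≠ 0 := by exact_mod_cast pi_ne_zero
  have hcoef : ∀ n : ℕ, n ≠ 0 → a n = ((π / Real.sinh (π * n) : ℝ) : ℂ) *
      ∫ u in (-π)..π, ψ u * (Real.sin (n * u) : ℂ) := by
    intro n hn
    rw [ha n]
    refine lebedev_coefficient hψ (fun x hx => ?_) hn
    rw [hf x hx]
    simp only [hφ]
  have m0 := measurable_besselKi 0
  have hψ2 : MemLp ψ 2 (volume.restrict (Set.Ioc (-π) π)) := by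
    obtain ⟨B, hB⟩ := isCompact_Icc.exists_bound_of_continuousOn hψ
    refine MemLp.of_bound ((hψ.mono Set.Ioc_subset_Icc_self).aestronglyMeasurable
      measurableSet_Ioc) B ?_
    exact (ae_restrict_mem measurableSet_Ioc).mono fun u hu => hB u (Set.Ioc_subset_Icc_self hu)
  have hg2 : MemLp (fun u => ((besselKi 0 (x * Real.cosh u) * Real.sinh (2 * u) : ℝ) : ℂ)) 2
      (volume.restrict (Set.Ioc (-π) π)) := by
    have hcont : ContinuousOn (fun u => Real.sinh (2 * u)) (Set.Icc (-π) π) := by fun_prop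
    obtain ⟨B, hB⟩ := isCompact_Icc.exists_bound_of_continuousOn hcont
    refine MemLp.of_bound (Measurable.aestronglyMeasurable (by fun_prop)) (besselKi 0 x * B) ?_
    refine (ae_restrict_mem measurableSet_Ioc).mono fun u hu => ?_
    rw [Complex.norm_real, norm_mul, Real.norm_of_nonneg (besselKi_zero_nonneg _)]
    exact mul_le_mul (besselKi_zero_le hx (le_mul_of_one_le_right hx.le (Real.one_le_cosh u)))
      (hB u (Set.Ioc_subset_Icc_self hu)) (norm_nonneg _) (besselKi_zero_nonneg _)
  -- each term of the series is `πx` times a product of two sine coefficients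
  have P := (hasSum_sine_parseval
    (g := fun u => besselKi 0 (x * Real.cosh u) * Real.sinh (2 * u)) (h := ψ)
    (fun u => by simp) hg2 hψ2).mul_left ((π * x : ℝ) : ℂ)
  convert! P using 1
  · ext n
    have hs : Real.sinh (π * ((n + 1 : ℕ) : ℝ)) ≠ 0 := by
      rw [Ne, Real.sinh_eq_zero]
      positivity
    have hsc : ((Real.sinh (π * ((n + 1 : ℕ) : ℝ)) : ℝ) : ℂ) ≠ 0 := by exact_mod_cast hs
    rw [hcoef (n + 1) n.succ_ne_zero, PhiKer, ← Nat.cast_succ, Nat.succ_eq_add_one]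
    simp only [Complex.ofReal_mul, Complex.ofReal_div]
    field_simp
  · rw [hf x hx]
    have e : ∫ u in (-π)..π,
        ((besselKi 0 (x * Real.cosh u) * Real.sinh (2 * u) : ℝ) : ℂ) * ψ u
        = 2 * ∫ u in (-π)..π, ((besselKi 0 (x * Real.cosh u) : ℝ) : ℂ) * φ u
          * (Real.cosh u : ℂ) := by
      rw [← intervalIntegral.integral_const_mul]
      refine intervalIntegral.integral_congr fun u _ => ?_
      simp only [hφ, Real.sinh_two_mul]
      push_cast
      ring
    rw [e]
    push_cast
    field_simp
end

section
/- For every a > 0 and t > 0, ∫_t^∞ y K₀(a y)/(y² − t²)^{1/2} dy = (π/(2a)) e^{−a t}. -/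
/-!
Substituting `w = y sinh u` in the definition of `K₀` gives
`K₀(a y) = ∫₀^∞ e^{-a √(y² + w²)} / √(y² + w²) dw`, and substituting `r = √(y² - t²)` in the outer
integral turns the left-hand side into the integral over the quadrant `r, w > 0` of the radial
function `e^{-a q} / q`, where `q = √(t² + r² + w²)`. By symmetry this is a quarter of the integral
over the plane. In polar coordinates the latter is `2π ∫₀^∞ ρ e^{-a q} / q dρ` with
`q = √(t² + ρ²)`, and since `ρ dρ = q dq` it equals `2π ∫_t^∞ e^{-a q} dq = (2π / a) e^{-a t}`.
-/

open MeasureTheory Real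

/-- The modified Bessel function of the second kind of order zero,
`K₀(x) = ∫₀^∞ e^{−x cosh u} du`. -/
noncomputable def besselK0 (x : ℝ) : ℝ :=
  ∫ u in Set.Ioi (0 : ℝ), Real.exp (-x * Real.cosh u)

/-- The Yukawa kernel `e^{-a q} / q`, as a function of the squared distance `s = q²`. -/
noncomputable def yukawa (a s : ℝ) : ℝ := Real.exp (-(a * √s)) / √s

/-- The substitution `r = √(y² - t²)`, valid without integrability assumptions. -/
lemma integral_Ioi_sqrt_substitution {t : ℝ} (ht : 0 < t) (h : ℝ → ℝ) :
    ∫ r in Set.Ioi (0 : ℝ), h r =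
      ∫ y in Set.Ioi t, y / √(y ^ 2 - t ^ 2) * h (√(y ^ 2 - t ^ 2)) := by
  have hpos : ∀ y ∈ Set.Ioi t, 0 < y ^ 2 - t ^ 2 := by
    intro y hy
    have : t < y := hy
    nlinarith
  have himg : (fun y : ℝ => √(y ^ 2 - t ^ 2)) '' Set.Ioi t = Set.Ioi 0 := by
    ext r
    constructor
    · rintro ⟨y, hy, rfl⟩
      exact Real.sqrt_pos.2 (hpos y hy)
    · intro hr
      have hr : 0 < r := hr
      refine ⟨√(r ^ 2 + t ^ 2), ?_, ?_⟩
      · exact Real.lt_sqrt_of_sq_lt (by nlinarith)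
      · simp only
        rw [Real.sq_sqrt (by positivity), add_sub_cancel_right, Real.sqrt_sq hr.le]
  have hinj : Set.InjOn (fun y : ℝ => √(y ^ 2 - t ^ 2)) (Set.Ioi t) := by
    intro x hx y hy hxy
    have h1 := (Real.sqrt_inj (hpos x hx).le (hpos y hy).le).1 hxy
    have hx' : t < x := hx
    have hy' : t < y := hy
    nlinarith
  have hder : ∀ y ∈ Set.Ioi t, HasDerivWithinAt (fun y : ℝ => √(y ^ 2 - t ^ 2))
      (y / √(y ^ 2 - t ^ 2)) (Set.Ioi t) y := by
    intro y hy
    have h1 : HasDerivAt (fun y : ℝ => y ^ 2 - t ^ 2) (2 * y) y := by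
      simpa using (hasDerivAt_pow 2 y).sub_const (t ^ 2)
    have h2 := (h1.sqrt (hpos y hy).ne').hasDerivWithinAt (s := Set.Ioi t)
    rwa [mul_div_mul_left _ _ two_ne_zero] at h2
  have key := integral_image_eq_integral_abs_deriv_smul measurableSet_Ioi hder hinj h
  rw [himg] at key
  rw [key]
  refine setIntegral_congr_fun measurableSet_Ioi fun y hy => ?_
  have hy' : 0 < y := ht.trans hy
  simp only [smul_eq_mul]
  rw [abs_of_nonneg (by positivity)]

/-- The substitution `w = y sinh u` in the integral defining `K₀`. -/
lemma besselK0_eq_integral_yukawa {a y : ℝ} (hy : 0 < y) :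
    besselK0 (a * y) = ∫ w in Set.Ioi (0 : ℝ), yukawa a (y ^ 2 + w ^ 2) := by
  have himg : (fun u : ℝ => y * Real.sinh u) '' Set.Ioi 0 = Set.Ioi 0 := by
    ext w
    constructor
    · rintro ⟨u, hu, rfl⟩
      exact mul_pos hy (Real.sinh_pos_iff.2 hu)
    · intro hw
      refine ⟨Real.arsinh (w / y), Real.arsinh_pos_iff.2 (div_pos hw hy), ?_⟩
      simp only [Real.sinh_arsinh]
      field_simp
  have hder : ∀ u ∈ Set.Ioi (0 : ℝ), HasDerivWithinAt (fun u : ℝ => y * Real.sinh u)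
      (y * Real.cosh u) (Set.Ioi 0) u := fun u _ =>
    ((Real.hasDerivAt_sinh u).const_mul y).hasDerivWithinAt
  have hinj : Set.InjOn (fun u : ℝ => y * Real.sinh u) (Set.Ioi 0) := fun u _ v _ huv =>
    Real.sinh_injective (mul_left_cancel₀ hy.ne' huv)
  have key := integral_image_eq_integral_abs_deriv_smul measurableSet_Ioi hder hinj
    (fun w => yukawa a (y ^ 2 + w ^ 2))
  rw [himg] at key
  rw [key, besselK0]
  refine setIntegral_congr_fun measurableSet_Ioi fun u _ => ?_
  have hc : 0 < y * Real.cosh u := mul_pos hy (Real.cosh_pos u)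
  have hs : √(y ^ 2 + (y * Real.sinh u) ^ 2) = y * Real.cosh u := by
    rw [← Real.sqrt_sq hc.le]
    congr 1
    rw [mul_pow, mul_pow, Real.cosh_sq]
    ring
  simp only [smul_eq_mul, yukawa, hs]
  rw [abs_of_pos hc, mul_div_cancel₀ _ hc.ne']
  congr 1
  ring

lemma integral_radial_yukawa {a t : ℝ} (ha : 0 < a) (ht : 0 < t) :
    ∫ r in Set.Ioi (0 : ℝ), r * yukawa a (t ^ 2 + r ^ 2) = Real.exp (-(a * t)) / a := by
  rw [integral_Ioi_sqrt_substitution ht]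
  have h : ∫ y in Set.Ioi t, Real.exp (-a * y) = Real.exp (-(a * t)) / a := by
    rw [integral_exp_mul_Ioi (neg_lt_zero.2 ha), neg_div_neg_eq, neg_mul]
  rw [← h]
  refine setIntegral_congr_fun measurableSet_Ioi fun y hy => ?_
  have hty : t < y := hy
  have hy0 : 0 < y := ht.trans hty
  have hpos : 0 < y ^ 2 - t ^ 2 := by nlinarith
  have hs : 0 < √(y ^ 2 - t ^ 2) := Real.sqrt_pos.2 hpos
  simp only [yukawa]
  rw [Real.sq_sqrt hpos.le, add_sub_cancel, Real.sqrt_sq hy0.le, neg_mul]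
  field_simp

lemma integral_plane_yukawa {a t : ℝ} (ha : 0 < a) (ht : 0 < t) :
    ∫ p : ℝ × ℝ, yukawa a (t ^ 2 + p.1 ^ 2 + p.2 ^ 2) =
      2 * π * (Real.exp (-(a * t)) / a) := by
  rw [← integral_comp_polarCoord_symm]
  have h : ∀ p : ℝ × ℝ, p.1 • yukawa a (t ^ 2 + (polarCoord.symm p).1 ^ 2 +
      (polarCoord.symm p).2 ^ 2) = p.1 * yukawa a (t ^ 2 + p.1 ^ 2) * 1 := by
    intro p
    have : t ^ 2 + (p.1 * Real.cos p.2) ^ 2 + (p.1 * Real.sin p.2) ^ 2 = t ^ 2 + p.1 ^ 2 := by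
      linear_combination p.1 ^ 2 * Real.sin_sq_add_cos_sq p.2
    simp [polarCoord_symm_apply, this]
  simp_rw [h]
  rw [polarCoord_target, Measure.volume_eq_prod,
    setIntegral_prod_mul (fun r : ℝ => r * yukawa a (t ^ 2 + r ^ 2)) (fun _ : ℝ => (1 : ℝ)),
    integral_radial_yukawa ha ht]
  have : ∫ _ in Set.Ioo (-π) π, (1 : ℝ) = 2 * π := by
    simp [Real.pi_pos.le]
    ring
  rw [this]
  ring

lemma integral_quadrant_yukawa {a t : ℝ} (ha : 0 < a) (ht : 0 < t) :
    ∫ r in Set.Ioi (0 : ℝ), ∫ w in Set.Ioi (0 : ℝ), yukawa a (t ^ 2 + r ^ 2 + w ^ 2) =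
      π / (2 * a) * Real.exp (-(a * t)) := by
  have hplane := integral_plane_yukawa ha ht
  -- A non-integrable function would have Bochner integral `0`.
  have hint : Integrable (fun p : ℝ × ℝ => yukawa a (t ^ 2 + p.1 ^ 2 + p.2 ^ 2)) := by
    by_contra hcon
    rw [integral_undef hcon] at hplane
    have : 0 < 2 * π * (Real.exp (-(a * t)) / a) := by positivity
    exact this.ne hplane
  rw [Measure.volume_eq_prod] at hint hplane
  rw [integral_prod _ hint] at hplane
  have hinner : ∀ r : ℝ, ∫ w, yukawa a (t ^ 2 + r ^ 2 + w ^ 2) =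
      2 * ∫ w in Set.Ioi (0 : ℝ), yukawa a (t ^ 2 + r ^ 2 + w ^ 2) := by
    intro r
    have h := integral_comp_abs (f := fun w => yukawa a (t ^ 2 + r ^ 2 + w ^ 2))
    simp only [sq_abs] at h
    exact h
  have houter := integral_comp_abs
    (f := fun r => ∫ w in Set.Ioi (0 : ℝ), yukawa a (t ^ 2 + r ^ 2 + w ^ 2))
  simp only [sq_abs] at houter
  simp only [hinner] at hplane
  rw [integral_const_mul, houter] at hplane
  have : π / (2 * a) * Real.exp (-(a * t)) =
      (2 * π * (Real.exp (-(a * t)) / a)) / 4 := by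
    field_simp
    norm_num
  rw [this, ← hplane]
  ring

/-- `∫_t^∞ y K₀(a y)/(y² − t²)^{1/2} dy = (π/(2a)) e^{−a t}` for `a, t > 0`. -/
theorem integral_besselK0_sqrt (a t : ℝ) (ha : 0 < a) (ht : 0 < t) :
    ∫ y in Set.Ioi t, y * besselK0 (a * y) / Real.sqrt (y ^ 2 - t ^ 2) =
      π / (2 * a) * Real.exp (-(a * t)) := by
  rw [← integral_quadrant_yukawa ha ht, integral_Ioi_sqrt_substitution ht]
  refine setIntegral_congr_fun measurableSet_Ioi fun y hy => ?_
  have hty : t < y := hy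
  have hpos : 0 < y ^ 2 - t ^ 2 := by nlinarith
  rw [Real.sq_sqrt hpos.le, add_sub_cancel, besselK0_eq_integral_yukawa (ht.trans hty)]
  ring
end

section
/- For every a > 0 and t > 0, ∫₀^t [2/π + x a M₀(a x)]/(t² − x²)^{1/2} dx = e^{−a t}, where M₀ is the modified Struve function. -/
/-!
With the substitution `x = t sin φ` and `s = a t`, the integral becomes
`1 - (2/π) ∫₀^{π/2} ∫₀^{π/2} s sin φ · exp (-s sin φ cos θ) dθ dφ`.
Here `sin φ dθ dφ` is the area element on an octant of the unit sphere and `sin φ cos θ` is a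
Cartesian coordinate, which is uniformly distributed by Archimedes' theorem, so the double integral
is `(π/2) (1 - exp (-s))`.

Archimedes' theorem is used in the form of moments: expanding the exponential, the `n`-th term of
the double integral is a multiple of the product of consecutive Wallis integrals, and
`wallis (n+1) * wallis n = π / (2 (n+1))` (`wallis_mul_wallis_succ`). The resulting series is again
an exponential series (`integral_sin_mul_integral_exp`).
-/

open MeasureTheory Real

/-- The modified Struve function `M₀(z) = −(2/π) ∫₀^{π/2} e^{−z cos θ} dθ`. -/
noncomputable def struveM (z : ℂ) : ℂ :=
  -(2 / π) * ∫ θ in (0 : ℝ)..(π / 2), Complex.exp (-z * Real.cos θ)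

/-- The Wallis integral `∫₀^{π/2} cosⁿ θ dθ`. -/
noncomputable def wallis (n : ℕ) : ℝ := ∫ θ in (0 : ℝ)..(π / 2), Real.cos θ ^ n

lemma integral_sin_pow_eq_wallis (n : ℕ) :
    ∫ φ in (0 : ℝ)..(π / 2), Real.sin φ ^ n = wallis n := by
  have h := intervalIntegral.integral_comp_sub_left (a := 0) (b := π / 2)
    (fun x => Real.cos x ^ n) (π / 2)
  simpa [wallis, Real.cos_pi_div_two_sub] using h

lemma wallis_mul_wallis_succ (n : ℕ) : wallis (n + 1) * wallis n = π / (2 * (n + 1)) := by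
  induction n with
  | zero => simp [wallis]
  | succ n ih =>
    have h : wallis (n + 2) = (n + 1) / (n + 2) * wallis n := by
      simp [wallis, integral_cos_pow]
    rw [show n + 1 + 1 = n + 2 from rfl, h, mul_assoc, mul_comm (wallis n), ih]
    push_cast
    field_simp
    ring

lemma abs_wallis_le (n : ℕ) : |wallis n| ≤ π / 2 := by
  have h := intervalIntegral.norm_integral_le_of_norm_le_const (a := 0) (b := π / 2) (C := 1)
    (f := fun θ => Real.cos θ ^ n) (fun θ _ => by
      rw [norm_pow]; exact pow_le_one₀ (norm_nonneg _) (Real.abs_cos_le_one θ))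
  simpa [wallis, abs_of_pos Real.pi_div_two_pos] using h

lemma hasSum_integral_of_norm_le {F : ℕ → ℝ → ℝ} {f : ℝ → ℝ} {b : ℕ → ℝ} (u v : ℝ)
    (hF : ∀ n, Continuous (F n)) (hb : ∀ n x, ‖F n x‖ ≤ b n) (hs : Summable b)
    (hf : ∀ x, HasSum (fun n => F n x) (f x)) :
    HasSum (fun n => ∫ x in u..v, F n x) (∫ x in u..v, f x) :=
  intervalIntegral.hasSum_integral_of_dominated_convergence (fun n _ => b n)
    (fun n => (hF n).aestronglyMeasurable)
    (fun n => ae_of_all _ fun x _ => hb n x)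
    (ae_of_all _ fun _ _ => hs) intervalIntegrable_const
    (ae_of_all _ fun x _ => hf x)

lemma hasSum_real_exp (x : ℝ) : HasSum (fun n : ℕ => x ^ n / (n.factorial : ℝ)) (Real.exp x) := by
  rw [Real.exp_eq_exp_ℝ]
  exact NormedSpace.expSeries_div_hasSum_exp x

lemma hasSum_integral_exp_cos (z : ℝ) :
    HasSum (fun n : ℕ => (-z) ^ n / (n.factorial : ℝ) * wallis n)
      (∫ θ in (0 : ℝ)..(π / 2), Real.exp (-z * Real.cos θ)) := by
  have h := hasSum_integral_of_norm_le (f := fun θ => Real.exp (-z * Real.cos θ))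
    (F := fun n θ => (-z) ^ n / (n.factorial : ℝ) * Real.cos θ ^ n)
    (b := fun n => |z| ^ n / (n.factorial : ℝ)) 0 (π / 2)
    (fun n => by fun_prop)
    (fun n θ => by
      rw [norm_mul, norm_div, norm_pow, norm_pow, norm_neg, Real.norm_eq_abs z,
        Real.norm_natCast]
      exact mul_le_of_le_one_right (by positivity)
        (pow_le_one₀ (norm_nonneg _) (Real.abs_cos_le_one θ)))
    (hasSum_real_exp |z|).summable
    (fun θ => by
      convert! hasSum_real_exp (-z * Real.cos θ) using 2 with n
      rw [mul_pow]; ring)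
  simpa only [intervalIntegral.integral_const_mul, wallis] using h

/-- Archimedes' theorem tested against `exp (-s x)`: both sides are `s` times the integral of
`exp (-s x)` over the octant of the unit sphere, in spherical coordinates with `x = sin φ cos θ` on
the left. -/
lemma integral_sin_mul_integral_exp (s : ℝ) :
    ∫ φ in (0 : ℝ)..(π / 2),
      s * Real.sin φ * ∫ θ in (0 : ℝ)..(π / 2), Real.exp (-(s * Real.sin φ) * Real.cos θ) =
      π / 2 * (1 - Real.exp (-s)) := by
  have h := hasSum_integral_of_norm_le
    (f := fun φ => s * Real.sin φ *
      ∫ θ in (0 : ℝ)..(π / 2), Real.exp (-(s * Real.sin φ) * Real.cos θ))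
    (F := fun n φ => s * (-s) ^ n / (n.factorial : ℝ) * wallis n * Real.sin φ ^ (n + 1))
    (b := fun n => |s| * (|s| ^ n / (n.factorial : ℝ)) * (π / 2)) 0 (π / 2)
    (fun n => by fun_prop)
    (fun n φ => by
      rw [norm_mul, norm_mul, norm_div, norm_mul, norm_pow, norm_pow, norm_neg,
        Real.norm_eq_abs s, Real.norm_natCast, mul_div_assoc]
      refine (mul_le_of_le_one_right (by positivity)
        (pow_le_one₀ (norm_nonneg _) (Real.abs_sin_le_one φ))).trans ?_
      exact mul_le_mul_of_nonneg_left (abs_wallis_le n) (by positivity))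
    (((hasSum_real_exp |s|).summable.mul_left _).mul_right _)
    (fun φ => by
      convert! (hasSum_integral_exp_cos (s * Real.sin φ)).mul_left (s * Real.sin φ) using 2 with n
      rw [← neg_mul, mul_pow]; ring)
  -- The `n`-th term is `-(π/2)` times the `(n+1)`-st term of the series of `exp (-s)`.
  have h' := ((hasSum_nat_add_iff' 1).2 (hasSum_real_exp (-s))).mul_left (-(π / 2))
  refine (h.unique ?_).trans (?_ : -(π / 2) * (Real.exp (-s) - 1) = _)
  · convert! h' using 2 with n
    · rw [intervalIntegral.integral_const_mul, integral_sin_pow_eq_wallis,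
        mul_assoc, mul_comm (wallis n), wallis_mul_wallis_succ, Nat.factorial_succ]
      push_cast
      field_simp
      ring
    · simp
  · ring

/-- The substitution `x = t sin φ`. No integrability of `g` is needed, since the change of
variables is a diffeomorphism of the open intervals. -/
lemma integral_div_sqrt_eq (g : ℝ → ℝ) {t : ℝ} (ht : 0 < t) :
    ∫ x in (0 : ℝ)..t, g x / Real.sqrt (t ^ 2 - x ^ 2) =
      ∫ φ in (0 : ℝ)..(π / 2), g (t * Real.sin φ) := by
  have hpi := Real.pi_pos
  have himg : (fun φ => t * Real.sin φ) '' Set.Ioo 0 (π / 2) = Set.Ioo 0 t := by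
    ext x
    constructor
    · rintro ⟨φ, ⟨h0, h1⟩, rfl⟩
      have hs : 0 < Real.sin φ := Real.sin_pos_of_pos_of_lt_pi h0 (by linarith)
      have hs1 : Real.sin φ < 1 := by
        rw [← Real.sin_pi_div_two]
        exact Real.sin_lt_sin_of_lt_of_le_pi_div_two (by linarith) le_rfl h1
      exact ⟨by positivity, by nlinarith⟩
    · rintro ⟨h0, h1⟩
      have hx : 0 < x / t := by positivity
      have hx1 : x / t < 1 := (div_lt_one ht).2 h1
      refine ⟨Real.arcsin (x / t), ⟨Real.arcsin_pos.2 hx, Real.arcsin_lt_pi_div_two.2 hx1⟩, ?_⟩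
      change t * Real.sin (Real.arcsin (x / t)) = x
      rw [Real.sin_arcsin (by linarith) hx1.le]
      field_simp
  have hinj : Set.InjOn (fun φ => t * Real.sin φ) (Set.Ioo 0 (π / 2)) := by
    intro x hx y hy hxy
    refine Real.injOn_sin ⟨by linarith [hx.1], hx.2.le⟩ ⟨by linarith [hy.1], hy.2.le⟩ ?_
    exact mul_left_cancel₀ ht.ne' hxy
  rw [intervalIntegral.integral_of_le ht.le, intervalIntegral.integral_of_le (by positivity),
    integral_Ioc_eq_integral_Ioo, integral_Ioc_eq_integral_Ioo, ← himg,
    integral_image_eq_integral_abs_deriv_smul measurableSet_Ioo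
      (fun φ _ => ((Real.hasDerivAt_sin φ).const_mul t).hasDerivWithinAt) hinj]
  refine setIntegral_congr_fun measurableSet_Ioo fun φ hφ => ?_
  have hc : 0 < Real.cos φ := Real.cos_pos_of_mem_Ioo ⟨by linarith [hφ.1], hφ.2⟩
  have hsq : Real.sqrt (t ^ 2 - (t * Real.sin φ) ^ 2) = t * Real.cos φ := by
    rw [show t ^ 2 - (t * Real.sin φ) ^ 2 = (t * Real.cos φ) ^ 2 by
      rw [mul_pow, mul_pow, Real.cos_sq']; ring]
    exact Real.sqrt_sq (by positivity)
  simp only [hsq, smul_eq_mul, abs_of_pos (mul_pos ht hc)]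
  field_simp

lemma struveM_ofReal (z : ℝ) :
    struveM (z : ℂ) =
      ((-(2 / π) * ∫ θ in (0 : ℝ)..(π / 2), Real.exp (-z * Real.cos θ) : ℝ) : ℂ) := by
  rw [struveM, Complex.ofReal_mul, ← intervalIntegral.integral_ofReal]
  push_cast
  rfl

/-- `∫₀^t [2/π + x a M₀(a x)]/(t² − x²)^{1/2} dx = e^{−a t}` for `a, t > 0`. -/
theorem integral_struveM_sqrt (a t : ℝ) (ha : 0 < a) (ht : 0 < t) :
    ∫ x in (0 : ℝ)..t,
        (((2 / π : ℝ) : ℂ) + ((x * a : ℝ) : ℂ) * struveM ((a * x : ℝ) : ℂ)) /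
          ((Real.sqrt (t ^ 2 - x ^ 2) : ℝ) : ℂ) =
      ((Real.exp (-(a * t)) : ℝ) : ℂ) := by
  simp only [struveM_ofReal, ← Complex.ofReal_mul, ← Complex.ofReal_add, ← Complex.ofReal_div]
  rw [intervalIntegral.integral_ofReal, integral_div_sqrt_eq _ ht]
  congr 1
  have hcont : Continuous fun φ : ℝ => (a * t) * Real.sin φ *
      ∫ θ in (0 : ℝ)..(π / 2), Real.exp (-((a * t) * Real.sin φ) * Real.cos θ) := by
    refine Continuous.mul (by fun_prop) ?_
    exact intervalIntegral.continuous_parametric_intervalIntegral_of_continuous' (by fun_prop) _ _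
  calc _ = ∫ φ in (0 : ℝ)..(π / 2), (2 / π - 2 / π * ((a * t) * Real.sin φ *
        ∫ θ in (0 : ℝ)..(π / 2), Real.exp (-((a * t) * Real.sin φ) * Real.cos θ))) := by
        refine intervalIntegral.integral_congr fun φ _ => ?_
        simp only [← mul_assoc a t]
        ring
    _ = _ := by
        rw [intervalIntegral.integral_sub intervalIntegrable_const
            ((hcont.const_mul _).intervalIntegrable _ _),
          intervalIntegral.integral_const_mul, integral_sin_mul_integral_exp,
          intervalIntegral.integral_const, smul_eq_mul]
        have := Real.pi_pos
        field_simp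
        ring
end

section
/- Let ψ : ℝ → ℂ be a 2π-periodic function satisfying the Lipschitz condition |ψ(u) − ψ(v)| ≤ C|u − v| for all u, v ∈ [−π, π], let φ(u) = ψ(u) sinh(u), and let f(x) = (2x/π) ∫_{−π}^{π} K₀(x cosh u) φ(u) cosh(u) du for x > 0. Then for every t > 0, ∫_t^∞ f(y)/(y² − t²)^{1/2} dy = ∫_{−π}^{π} e^{−t cosh u} φ(u) du. -/
/-!
By Fubini, the identity reduces to the Abel-type transform of `K₀`: for `c, t > 0`,
`∫_t^∞ (2 y c / π) K₀(c y) / √(y² - t²) dy = e^{-c t}`, applied with `c = cosh u`.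

For the transform, substitute `y = √(t² + s²)`, which absorbs the factor `y / √(y² - t²)`, and, in
the integral defining `K₀(c √(t² + s²))`, put `sinh v = q / √(t² + s²)`. What is left is the
integral over the quadrant `s, q > 0` of the radial function `e^{-c R} / R` with
`R = √(t² + s² + q²)`; polar coordinates turn it into
`(π / 2) ∫_t^∞ e^{-c R} dR = (π / 2) e^{-c t} / c` (`lintegral_besselK0_sqrt`).

This computation takes place with lower Lebesgue integrals, where Tonelli and the changes of
variables need no integrability. Its finite value then gives the integrability of the kernel in
`y` (`kernel_integral`), and hence on the product, since `|φ(u)| e^{-t cosh u}` is integrable on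
`[-π, π]`. The Lipschitz condition is used only for the continuity of `φ` there.
-/

open MeasureTheory Real

lemma besselK0_nonneg (x : ℝ) : 0 ≤ besselK0 x :=
  integral_nonneg fun _ => (exp_pos _).le

lemma measurable_besselK0 : Measurable besselK0 := by
  have h : StronglyMeasurable (fun p : ℝ × ℝ => Real.exp (-p.1 * Real.cosh p.2)) := by
    apply Continuous.stronglyMeasurable
    fun_prop
  exact (h.integral_prod_right' (ν := volume.restrict (Set.Ioi (0 : ℝ)))).measurable

lemma ofReal_besselK0 {x : ℝ} (hx : 0 < x) :
    ENNReal.ofReal (besselK0 x) =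
      ∫⁻ v in Set.Ioi (0 : ℝ), ENNReal.ofReal (Real.exp (-x * Real.cosh v)) := by
  unfold besselK0
  refine ofReal_integral_eq_lintegral_ofReal ?_ (ae_of_all _ fun _ => (exp_pos _).le)
  refine (exp_neg_integrableOn_Ioi 0 hx).mono' (by fun_prop) ?_
  refine (ae_restrict_iff' measurableSet_Ioi).2 (ae_of_all _ fun v hv => ?_)
  rw [Real.norm_eq_abs, abs_of_pos (exp_pos _)]
  have h1 : v ≤ Real.sinh v := Real.self_le_sinh_iff.2 (le_of_lt hv)
  have h2 : Real.sinh v < Real.cosh v := Real.sinh_lt_cosh v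
  apply Real.exp_le_exp.2
  nlinarith

/-- The substitution `y = √(t² + s²)`. -/
lemma lintegral_Ioi_sqrt_subst {t : ℝ} (ht : 0 < t) (g : ℝ → ENNReal) :
    ∫⁻ y in Set.Ioi t, g y =
      ∫⁻ s in Set.Ioi (0 : ℝ), ENNReal.ofReal (s / √(t ^ 2 + s ^ 2)) * g (√(t ^ 2 + s ^ 2)) := by
  have himg : (fun s : ℝ => √(t ^ 2 + s ^ 2)) '' Set.Ioi 0 = Set.Ioi t := by
    ext y
    simp only [Set.mem_image, Set.mem_Ioi]
    constructor
    · rintro ⟨s, hs, rfl⟩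
      apply Real.lt_sqrt_of_sq_lt
      nlinarith [mul_pos hs hs]
    · intro hy
      have : 0 < y ^ 2 - t ^ 2 := by nlinarith
      refine ⟨√(y ^ 2 - t ^ 2), Real.sqrt_pos.2 this, ?_⟩
      rw [Real.sq_sqrt this.le, add_sub_cancel, Real.sqrt_sq (by linarith)]
  have hinj : Set.InjOn (fun s : ℝ => √(t ^ 2 + s ^ 2)) (Set.Ioi 0) := by
    intro a ha b hb hab
    have h := (Real.sqrt_inj (by positivity) (by positivity)).1 hab
    have ha' : (0 : ℝ) < a := ha
    have hb' : (0 : ℝ) < b := hb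
    exact (pow_left_inj₀ ha'.le hb'.le two_ne_zero).1 (by linarith)
  have hder : ∀ s ∈ Set.Ioi (0 : ℝ), HasDerivWithinAt (fun s : ℝ => √(t ^ 2 + s ^ 2))
      (s / √(t ^ 2 + s ^ 2)) (Set.Ioi 0) s := by
    intro s hs
    have h1 : HasDerivAt (fun s : ℝ => t ^ 2 + s ^ 2) (2 * s) s := by
      simpa using (hasDerivAt_pow 2 s).const_add (t ^ 2)
    have h2 := h1.sqrt (by positivity)
    rw [mul_div_mul_left _ _ two_ne_zero] at h2
    exact h2.hasDerivWithinAt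
  rw [← himg, lintegral_image_eq_lintegral_abs_deriv_mul measurableSet_Ioi hder hinj]
  refine setLIntegral_congr_fun measurableSet_Ioi fun s hs => ?_
  have hs' : (0 : ℝ) < s := hs
  rw [abs_of_pos (by positivity)]

/-- The substitution `sinh v = q / √(t² + s²)` in the integral defining `K₀(c √(t² + s²))`. -/
lemma ofReal_besselK0_sqrt {c t : ℝ} (hc : 0 < c) (ht : 0 < t) (s : ℝ) :
    ENNReal.ofReal (besselK0 (c * √(t ^ 2 + s ^ 2))) =
      ∫⁻ q in Set.Ioi (0 : ℝ), ENNReal.ofReal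
        (Real.exp (-(c * √(t ^ 2 + (s ^ 2 + q ^ 2)))) / √(t ^ 2 + (s ^ 2 + q ^ 2))) := by
  set w := √(t ^ 2 + s ^ 2) with hw
  have hwpos : 0 < w := by positivity
  have hw2 : w ^ 2 = t ^ 2 + s ^ 2 := Real.sq_sqrt (by positivity)
  have himg : (fun q : ℝ => arsinh (q / w)) '' Set.Ioi 0 = Set.Ioi 0 := by
    ext v
    simp only [Set.mem_image, Set.mem_Ioi]
    constructor
    · rintro ⟨q, hq, rfl⟩
      exact arsinh_pos_iff.2 (by positivity)
    · intro hv
      refine ⟨w * Real.sinh v, mul_pos hwpos (Real.sinh_pos_iff.2 hv), ?_⟩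
      rw [mul_div_cancel_left₀ _ hwpos.ne', arsinh_sinh]
  have hinj : Set.InjOn (fun q : ℝ => arsinh (q / w)) (Set.Ioi 0) := by
    intro a _ b _ hab
    have h := arsinh_injective hab
    exact (div_left_inj' hwpos.ne').1 h
  have hroot : ∀ q : ℝ, w * √(1 + (q / w) ^ 2) = √(t ^ 2 + (s ^ 2 + q ^ 2)) := by
    intro q
    rw [← add_assoc, ← hw2]
    nth_rewrite 1 [← Real.sqrt_sq hwpos.le]
    rw [← Real.sqrt_mul (by positivity)]
    congr 1
    field_simp
  have hder : ∀ q ∈ Set.Ioi (0 : ℝ), HasDerivWithinAt (fun q : ℝ => arsinh (q / w))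
      (1 / √(t ^ 2 + (s ^ 2 + q ^ 2))) (Set.Ioi 0) q := by
    intro q _
    have h := ((hasDerivAt_id q).div_const w).arsinh
    refine (h.congr_deriv ?_).hasDerivWithinAt
    rw [← hroot q]
    simp only [id_eq, smul_eq_mul]
    field_simp
  rw [ofReal_besselK0 (by positivity)]
  nth_rewrite 1 [← himg]
  rw [lintegral_image_eq_lintegral_abs_deriv_mul measurableSet_Ioi hder hinj]
  refine setLIntegral_congr_fun measurableSet_Ioi fun q hq => ?_
  rw [← ENNReal.ofReal_mul (abs_nonneg _), abs_of_nonneg (by positivity), cosh_arsinh,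
    ← hroot q]
  congr 1
  rw [show -(c * w) * √(1 + (q / w) ^ 2) = -(c * (w * √(1 + (q / w) ^ 2))) by ring]
  ring

/-- Polar coordinates for a radial function on the open quadrant. -/
lemma lintegral_quadrant (G : ℝ → ENNReal) (hG : Measurable G) :
    ∫⁻ s in Set.Ioi (0 : ℝ), ∫⁻ q in Set.Ioi (0 : ℝ), G (s ^ 2 + q ^ 2) =
      ENNReal.ofReal (π / 2) * ∫⁻ r in Set.Ioi (0 : ℝ), ENNReal.ofReal r * G (r ^ 2) := by
  have hm : Measurable (fun p : ℝ × ℝ => G (p.1 ^ 2 + p.2 ^ 2)) := hG.comp (by fun_prop)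
  have hQ : MeasurableSet (Set.Ioi (0 : ℝ) ×ˢ Set.Ioi (0 : ℝ)) :=
    measurableSet_Ioi.prod measurableSet_Ioi
  have hT : MeasurableSet (Set.Ioi (0 : ℝ) ×ˢ Set.Ioo (0 : ℝ) (π / 2)) :=
    measurableSet_Ioi.prod measurableSet_Ioo
  have hm2 : Measurable (fun p : ℝ × ℝ => ENNReal.ofReal p.1 * G (p.1 ^ 2)) :=
    (by fun_prop : Measurable fun p : ℝ × ℝ => ENNReal.ofReal p.1).mul (hG.comp (by fun_prop))
  calc
    _ = ∫⁻ p in Set.Ioi (0 : ℝ) ×ˢ Set.Ioi (0 : ℝ), G (p.1 ^ 2 + p.2 ^ 2) := by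
      rw [Measure.volume_eq_prod, ← Measure.prod_restrict, lintegral_prod _ hm.aemeasurable]
    _ = ∫⁻ p in Set.Ioi (0 : ℝ) ×ˢ Set.Ioo (0 : ℝ) (π / 2),
          ENNReal.ofReal p.1 * G (p.1 ^ 2) := by
      rw [← lintegral_indicator hQ, ← lintegral_comp_polarCoord_symm,
        ← lintegral_indicator polarCoord.open_target.measurableSet, ← lintegral_indicator hT]
      congr 1
      ext ⟨r, θ⟩
      have hpi := Real.pi_pos
      by_cases h : (r, θ) ∈ polarCoord.target
      · rw [Set.indicator_of_mem h]
        obtain ⟨hr, hθ1, hθ2⟩ := h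
        simp only [Set.mem_Ioi] at hr
        simp only at hθ1 hθ2
        by_cases hθ : θ ∈ Set.Ioo 0 (π / 2)
        · have hs : 0 < sin θ := sin_pos_of_mem_Ioo ⟨hθ.1, hθ2⟩
          have hcos : 0 < cos θ := cos_pos_of_mem_Ioo ⟨by linarith [hθ.1], hθ.2⟩
          rw [Set.indicator_of_mem, Set.indicator_of_mem]
          · simp only [polarCoord_symm_apply, smul_eq_mul]
            congr 2
            nlinarith [sin_sq_add_cos_sq θ]
          · exact ⟨hr, hθ⟩
          · exact ⟨mul_pos hr hcos, mul_pos hr hs⟩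
        · rw [Set.indicator_of_notMem, Set.indicator_of_notMem, smul_zero]
          · exact fun h' => hθ h'.2
          · rintro ⟨h1, h2⟩
            simp only [polarCoord_symm_apply, Set.mem_Ioi] at h1 h2
            have hcos : 0 < cos θ := pos_of_mul_pos_right h1 hr.le
            have hs : 0 < sin θ := pos_of_mul_pos_right h2 hr.le
            refine hθ ⟨?_, ?_⟩
            · by_contra hle
              exact absurd (sin_nonpos_of_nonpos_of_neg_pi_le (not_lt.1 hle) hθ1.le) (not_le.2 hs)
            · by_contra hle
              exact absurd (cos_nonpos_of_pi_div_two_le_of_le (not_lt.1 hle) (by linarith))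
                (not_le.2 hcos)
      · rw [Set.indicator_of_notMem h, Set.indicator_of_notMem]
        rintro ⟨h1, h2, h3⟩
        simp only at h2 h3
        exact h ⟨h1, by simp only; linarith, by simp only; linarith⟩
    _ = _ := by
      rw [Measure.volume_eq_prod, ← Measure.prod_restrict, lintegral_prod _ hm2.aemeasurable]
      simp only [lintegral_const, Measure.restrict_apply MeasurableSet.univ, Set.univ_inter,
        Real.volume_Ioo, sub_zero]
      rw [lintegral_mul_const' _ _ ENNReal.ofReal_ne_top, mul_comm]

lemma lintegral_besselK0_sqrt {c t : ℝ} (hc : 0 < c) (ht : 0 < t) :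
    ∫⁻ s in Set.Ioi (0 : ℝ), ENNReal.ofReal (besselK0 (c * √(t ^ 2 + s ^ 2))) =
      ENNReal.ofReal (π / 2 * (Real.exp (-(t * c)) / c)) := by
  simp_rw [ofReal_besselK0_sqrt hc ht]
  rw [lintegral_quadrant (fun x => ENNReal.ofReal
    (Real.exp (-(c * √(t ^ 2 + x))) / √(t ^ 2 + x))) (by fun_prop),
    ENNReal.ofReal_mul (by positivity)]
  congr 1
  -- The radial integral is the substitution `y = √(t² + r²)` read backwards.
  have h1 : ENNReal.ofReal (Real.exp (-(t * c)) / c) =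
      ∫⁻ y in Set.Ioi t, ENNReal.ofReal (Real.exp (-c * y)) := by
    rw [← ofReal_integral_eq_lintegral_ofReal (exp_neg_integrableOn_Ioi t hc)
      (ae_of_all _ fun _ => (exp_pos _).le), integral_exp_mul_Ioi (by linarith), neg_div_neg_eq]
    congr 3
    ring
  rw [h1, lintegral_Ioi_sqrt_subst ht]
  refine setLIntegral_congr_fun measurableSet_Ioi fun r hr => ?_
  have hr' : (0 : ℝ) < r := hr
  rw [← ENNReal.ofReal_mul hr'.le, ← ENNReal.ofReal_mul (by positivity)]
  congr 1
  rw [neg_mul]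
  ring

/-- The kernel `(2 y c / π) K₀(y c) / √(y² - t²)` through which `φ` enters the double integral,
with `c = cosh u`. -/
noncomputable def abelKernel (t c y : ℝ) : ℝ :=
  2 * y / π * (besselK0 (y * c) * c) / √(y ^ 2 - t ^ 2)

lemma measurable_abelKernel (t : ℝ) : Measurable (fun p : ℝ × ℝ => abelKernel t p.2 p.1) := by
  unfold abelKernel
  have h : Measurable (fun p : ℝ × ℝ => besselK0 (p.1 * p.2)) :=
    measurable_besselK0.comp (by fun_prop)
  fun_prop

lemma abelKernel_nonneg {t c y : ℝ} (hc : 0 < c) (hy : 0 < y) : 0 ≤ abelKernel t c y := by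
  have := besselK0_nonneg (y * c)
  unfold abelKernel
  positivity

lemma lintegral_abelKernel {c t : ℝ} (hc : 0 < c) (ht : 0 < t) :
    ∫⁻ y in Set.Ioi t, ENNReal.ofReal (abelKernel t c y) =
      ENNReal.ofReal (Real.exp (-(t * c))) := by
  rw [lintegral_Ioi_sqrt_subst ht]
  have h : ∀ s ∈ Set.Ioi (0 : ℝ), ENNReal.ofReal (s / √(t ^ 2 + s ^ 2)) *
      ENNReal.ofReal (abelKernel t c √(t ^ 2 + s ^ 2)) =
      ENNReal.ofReal (2 * c / π) * ENNReal.ofReal (besselK0 (c * √(t ^ 2 + s ^ 2))) := by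
    intro s hs
    have hs' : (0 : ℝ) < s := hs
    have hpi := Real.pi_pos
    have hw : 0 < √(t ^ 2 + s ^ 2) := by positivity
    rw [← ENNReal.ofReal_mul (by positivity), ← ENNReal.ofReal_mul (by positivity)]
    congr 1
    unfold abelKernel
    rw [Real.sq_sqrt (by positivity), add_sub_cancel_left, Real.sqrt_sq hs'.le,
      mul_comm _ c]
    field_simp
  rw [setLIntegral_congr_fun measurableSet_Ioi h, lintegral_const_mul' _ _ ENNReal.ofReal_ne_top,
    lintegral_besselK0_sqrt hc ht, ← ENNReal.ofReal_mul (by positivity)]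
  congr 1
  field_simp

lemma kernel_integral {c t : ℝ} (hc : 0 < c) (ht : 0 < t) :
    IntegrableOn (abelKernel t c) (Set.Ioi t) ∧
      ∫ y in Set.Ioi t, abelKernel t c y = Real.exp (-(t * c)) := by
  have hmeas : Measurable (abelKernel t c) :=
    (measurable_abelKernel t).comp (by fun_prop : Measurable fun y : ℝ => (y, c))
  have hnn : 0 ≤ᵐ[volume.restrict (Set.Ioi t)] abelKernel t c :=
    (ae_restrict_iff' measurableSet_Ioi).2
      (ae_of_all _ fun y hy => abelKernel_nonneg hc (ht.trans hy))
  have hl := lintegral_abelKernel hc ht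
  refine ⟨⟨hmeas.aestronglyMeasurable, ?_⟩, ?_⟩
  · rw [hasFiniteIntegral_iff_ofReal hnn, hl]
    exact ENNReal.ofReal_lt_top
  · rw [integral_eq_lintegral_of_nonneg_ae hnn hmeas.aestronglyMeasurable, hl,
      ENNReal.toReal_ofReal (exp_pos _).le]

/-- `∫_t^∞ f(y)/(y² − t²)^{1/2} dy = ∫_{−π}^{π} e^{−t cosh u} φ(u) du` for the
function `f` of Theorem 1. -/
theorem integral_f_sqrt_Ioi
    (C : ℝ) (hC : 0 < C) (ψ : ℝ → ℂ)
    (hper : ∀ u : ℝ, ψ (u + 2 * π) = ψ u)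
    (hlip : ∀ u ∈ Set.Icc (-π) π, ∀ v ∈ Set.Icc (-π) π, ‖ψ u - ψ v‖ ≤ C * |u - v|)
    (φ : ℝ → ℂ) (hφ : ∀ u : ℝ, φ u = ψ u * Real.sinh u)
    (f : ℝ → ℂ)
    (hf : ∀ x : ℝ, 0 < x → f x = ((2 * x / π : ℝ) : ℂ) *
      ∫ u in (-π)..π, ((besselK0 (x * Real.cosh u) : ℝ) : ℂ) * φ u * (Real.cosh u : ℂ)) :
    ∀ t : ℝ, 0 < t →
      ∫ y in Set.Ioi t, f y / ((Real.sqrt (y ^ 2 - t ^ 2) : ℝ) : ℂ) =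
        ∫ u in (-π)..π, ((Real.exp (-(t * Real.cosh u)) : ℝ) : ℂ) * φ u := by
  intro t ht
  have hπ : -π ≤ π := by linarith [Real.pi_pos]
  have hψc : ContinuousOn ψ (Set.Icc (-π) π) := by
    refine (LipschitzOnWith.of_dist_le_mul (K := ⟨C, hC.le⟩) fun u hu v hv => ?_).continuousOn
    rw [dist_eq_norm, Real.dist_eq]
    exact hlip u hu v hv
  have hφc : ContinuousOn φ (Set.Icc (-π) π) := by
    rw [show φ = fun u => ψ u * Real.sinh u from funext hφ]
    exact hψc.mul (by fun_prop)
  have hφm : AEStronglyMeasurable φ (volume.restrict (Set.Ioc (-π) π)) :=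
    (hφc.mono Set.Ioc_subset_Icc_self).aestronglyMeasurable measurableSet_Ioc
  have hker (u : ℝ) := kernel_integral (Real.cosh_pos u) ht
  have hLHS : ∫ y in Set.Ioi t, f y / ((√(y ^ 2 - t ^ 2) : ℝ) : ℂ) =
      ∫ y in Set.Ioi t, ∫ u in Set.Ioc (-π) π,
        ((abelKernel t (Real.cosh u) y : ℝ) : ℂ) * φ u := by
    refine setIntegral_congr_fun measurableSet_Ioi fun y hy => ?_
    rw [hf y (ht.trans hy), intervalIntegral.integral_of_le hπ, ← integral_const_mul,
      ← integral_div]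
    congr 1
    ext u
    unfold abelKernel
    push_cast
    ring
  have hint : Integrable
      (Function.uncurry fun y u : ℝ => ((abelKernel t (Real.cosh u) y : ℝ) : ℂ) * φ u)
      ((volume.restrict (Set.Ioi t)).prod (volume.restrict (Set.Ioc (-π) π))) := by
    have hkm : Measurable (fun p : ℝ × ℝ => ((abelKernel t (Real.cosh p.2) p.1 : ℝ) : ℂ)) :=
      Complex.measurable_ofReal.comp ((measurable_abelKernel t).comp
        (by fun_prop : Measurable fun p : ℝ × ℝ => (p.1, Real.cosh p.2)))
    refine (integrable_prod_iff' (hkm.aestronglyMeasurable.mul hφm.comp_snd)).2 ⟨?_, ?_⟩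
    · exact ae_of_all _ fun u => ((hker u).1.ofReal (𝕜 := ℂ)).mul_const (φ u)
    · have hnorm : ∀ u : ℝ,
          ∫ y in Set.Ioi t, ‖((abelKernel t (Real.cosh u) y : ℝ) : ℂ) * φ u‖ =
            Real.exp (-(t * Real.cosh u)) * ‖φ u‖ := by
        intro u
        rw [← (hker u).2, ← integral_mul_const]
        refine setIntegral_congr_fun measurableSet_Ioi fun y hy => ?_
        rw [norm_mul, Complex.norm_real, Real.norm_of_nonneg
          (abelKernel_nonneg (Real.cosh_pos u) (ht.trans hy))]
      refine Integrable.congr ?_ (ae_of_all _ fun u => (hnorm u).symm)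
      have hcont : ContinuousOn (fun u => Real.exp (-(t * Real.cosh u)) * ‖φ u‖)
          (Set.Icc (-π) π) :=
        ContinuousOn.mul (by fun_prop) hφc.norm
      exact (hcont.integrableOn_Icc).mono_set Set.Ioc_subset_Icc_self
  rw [hLHS, integral_integral_swap hint, intervalIntegral.integral_of_le hπ]
  congr 1
  ext u
  rw [integral_mul_const, integral_complex_ofReal, (hker u).2]
end
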